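/- Assume condition (Cond1). If u_τ ≡ 0, then, apart from the zero solution, every non-negative strong solution to problem (Incl) has the form u(t) = 0 for τ ≤ t ≤ t₀ and u(t) = u_{t₀}(t) for t ≥ t₀, where t₀ ≥ τ and u_{t₀} is the unique solution of the linear problem ∂u/∂t − ∂²u/∂x² = b(t) + ω(t)u on (t₀,∞)×(0,1) with Dirichlet boundary conditions and u(t₀,·)=0; moreover u(t) is positive for all t > t₀. -/

import Mathlib

open MeasureTheory Set

noncomputable section

/-- Lebesgue measure restricted to the spatial interval `(0,1)`. -/
def μ01 : Measure ℝ := volume.restrict (Ioo (0:ℝ) 1)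

/-- `H = L²(0,1)`. -/
abbrev Hsp : Type := Lp ℝ 2 μ01

/-- The Heaviside multifunction. -/
def heaviside (s : ℝ) : Set ℝ :=
  if s < 0 then {-1} else if s = 0 then Icc (-1) 1 else {1}

/-- Condition (Cond1). -/
structure Cond1 (b ω : ℝ → ℝ) (b0 b1 ω0 ω1 : ℝ) : Prop where
  contb : Continuous b
  contω : Continuous ω
  b0pos : 0 < b0
  blb : ∀ t, b0 ≤ b t
  bub : ∀ t, b t ≤ b1
  ω0nonneg : 0 ≤ ω0
  ωlb : ∀ t, ω0 ≤ ω t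
  ωub : ∀ t, ω t ≤ ω1

/-- `v ∈ H²(0,1) ∩ H¹₀(0,1)` with (weak) second derivative `w ∈ L²(0,1)`:
`v` has a representative that is continuous on `[0,1]`, vanishes at the boundary,
is differentiable on `(0,1)` and whose derivative is an antiderivative of `w`. -/
def InDomainA (v w : Hsp) : Prop :=
  ∃ vt : ℝ → ℝ, ContinuousOn vt (Icc 0 1) ∧ vt 0 = 0 ∧ vt 1 = 0 ∧
    (∀ᵐ x ∂μ01, vt x = v x) ∧
    ∃ g : ℝ → ℝ,
      (∀ x ∈ Ioo (0:ℝ) 1, HasDerivAt vt (g x) x) ∧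
      ∀ x ∈ Ioo (0:ℝ) 1, ∀ y ∈ Ioo (0:ℝ) 1, g x - g y = ∫ z in y..x, w z

/-- A strong solution of the inclusion on `[τ,∞)`, with explicit data:
`r` is the `L²`-selection, `u'` the time derivative, `uxx` the second spatial derivative. -/
structure IsStrongSolutionWith (b ω : ℝ → ℝ) (τ : ℝ) (u r u' uxx : ℝ → Hsp) : Prop where
  cont : ContinuousOn u (Ici τ)
  rmem : ∀ T, τ < T → MemLp r 2 (volume.restrict (Ioo τ T))
  sel : ∀ᵐ t ∂(volume.restrict (Ioi τ)), ∀ᵐ x ∂μ01,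
      ∃ h ∈ heaviside (u t x), r t x = b t * h + ω t * u t x
  dom : ∀ᵐ t ∂(volume.restrict (Ioi τ)), InDomainA (u t) (uxx t)
  eq : ∀ᵐ t ∂(volume.restrict (Ioi τ)), u' t = r t + uxx t
  fund : ∀ T1 T2 : ℝ, τ < T1 → T1 < T2 →
      IntervalIntegrable u' volume T1 T2 ∧
      ∀ t ∈ Icc T1 T2, u t = u T1 + ∫ s in T1..t, u' s

/-- A strong solution of the inclusion on `[τ,∞)`. -/
def IsStrongSolution (b ω : ℝ → ℝ) (τ : ℝ) (u : ℝ → Hsp) : Prop :=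
  ∃ r u' uxx, IsStrongSolutionWith b ω τ u r u' uxx

/-- The solution is non-negative on `[τ,∞)`. -/
def NonnegOn (u : ℝ → Hsp) (τ : ℝ) : Prop :=
  ∀ t, τ ≤ t → ∀ᵐ x ∂μ01, 0 ≤ u t x

/-- `v` is positive: it has a continuous representative on `[0,1]`
which is strictly positive on `(0,1)`. -/
def IsPositive (v : Hsp) : Prop :=
  ∃ vt : ℝ → ℝ, ContinuousOn vt (Icc 0 1) ∧ (∀ᵐ x ∂μ01, vt x = v x) ∧
    ∀ x ∈ Ioo (0:ℝ) 1, 0 < vt x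


/-- A strong solution of the linear problem
`∂u/∂t − ∂²u/∂x² = b(t) + ω(t)u` on `(τ,∞)×(0,1)` with Dirichlet boundary
conditions, with explicit time derivative `u'` and second spatial derivative `uxx`. -/
structure IsLinearSolutionWith (b ω : ℝ → ℝ) (τ : ℝ) (u u' uxx : ℝ → Hsp) : Prop where
  cont : ContinuousOn u (Ici τ)
  dom : ∀ᵐ t ∂(volume.restrict (Ioi τ)), InDomainA (u t) (uxx t)
  eq : ∀ᵐ t ∂(volume.restrict (Ioi τ)), ∀ᵐ x ∂μ01,
      u' t x = b t + ω t * u t x + uxx t x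
  fund : ∀ T1 T2 : ℝ, τ < T1 → T1 < T2 →
      IntervalIntegrable u' volume T1 T2 ∧
      ∀ t ∈ Icc T1 T2, u t = u T1 + ∫ s in T1..t, u' s

/-- A strong solution of the linear problem on `[τ,∞)`. -/
def IsLinearSolution (b ω : ℝ → ℝ) (τ : ℝ) (u : ℝ → Hsp) : Prop :=
  ∃ u' uxx, IsLinearSolutionWith b ω τ u u' uxx

lemma ae_μ01_iff {p : ℝ → Prop} : (∀ᵐ x ∂μ01, p x) ↔ ∀ᵐ x, x ∈ Ioo (0:ℝ) 1 → p x := by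
  unfold μ01; exact ae_restrict_iff' measurableSet_Ioo

instance instProbμ01 : IsProbabilityMeasure μ01 := ⟨by simp [μ01]⟩

lemma integral_μ01 (f : ℝ → ℝ) : ∫ x, f x ∂μ01 = ∫ x in (0:ℝ)..1, f x := by
  rw [intervalIntegral.integral_of_le zero_le_one, integral_Ioc_eq_integral_Ioo]; rfl

lemma intervalIntegrable_Hsp (w : Hsp) : IntervalIntegrable (w : ℝ → ℝ) volume 0 1 := by
  have h : Integrable (w : ℝ → ℝ) μ01 := (Lp.memLp w).integrable (by norm_num)
  rw [intervalIntegrable_iff_integrableOn_Ioo_of_le zero_le_one]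
  exact h

lemma AC_of_C1 {f f' : ℝ → ℝ} (hf : ContinuousOn f (Icc 0 1))
    (hd : ∀ x ∈ Ioo (0:ℝ) 1, HasDerivAt f (f' x) x) (hf' : ContinuousOn f' (Icc 0 1)) :
    AbsolutelyContinuousOnInterval f 0 1 := by
  obtain ⟨C, hC⟩ := isCompact_Icc.exists_bound_of_continuousOn hf'
  have hC0 : 0 ≤ C := (norm_nonneg _).trans (hC 0 (by simp))
  have key : ∀ x ∈ Icc (0:ℝ) 1, ∀ y ∈ Icc (0:ℝ) 1, x < y → |f y - f x| ≤ C * (y - x) := by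
    intro x hx y hy hxy
    obtain ⟨c, hc, hc2⟩ := exists_hasDerivAt_eq_slope f f' hxy
      (hf.mono (Icc_subset_Icc hx.1 hy.2))
      (fun z hz => hd z ⟨lt_of_le_of_lt hx.1 hz.1, lt_of_lt_of_le hz.2 hy.2⟩)
    have h1 : f y - f x = f' c * (y - x) := by
      rw [hc2]; field_simp [(sub_pos.2 hxy).ne']
    rw [h1, abs_mul, abs_of_pos (sub_pos.2 hxy)]
    exact mul_le_mul_of_nonneg_right (hC c ⟨hx.1.trans hc.1.le, hc.2.le.trans hy.2⟩)
      (sub_pos.2 hxy).le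
  apply LipschitzOnWith.absolutelyContinuousOnInterval (K := ⟨C, hC0⟩)
  rw [uIcc_of_le zero_le_one]
  apply LipschitzOnWith.of_dist_le_mul
  intro x hx y hy
  rw [Real.dist_eq, Real.dist_eq]
  change _ ≤ C * _
  rcases lt_trichotomy x y with h | h | h
  · rw [abs_sub_comm, abs_sub_comm x y, abs_of_pos (sub_pos.2 h)]; exact key x hx y hy h
  · subst h; simp
  · rw [abs_of_pos (sub_pos.2 h)]; exact key y hy x hx h

lemma domA_rep {v w : Hsp} (h : InDomainA v w) :
    ∃ vt g : ℝ → ℝ, ContinuousOn vt (Icc 0 1) ∧ vt 0 = 0 ∧ vt 1 = 0 ∧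
    (∀ᵐ x ∂μ01, vt x = v x) ∧ (∀ x ∈ Ioo (0:ℝ) 1, HasDerivAt vt (g x) x) ∧
    AbsolutelyContinuousOnInterval g 0 1 ∧ (∀ᵐ x ∂μ01, HasDerivAt g (w x) x) := by
  obtain ⟨vt, h1, h2, h3, h4, g, h5, h6⟩ := h
  have hw := intervalIntegrable_Hsp w
  have hh : (1/2:ℝ) ∈ uIcc (0:ℝ) 1 := by rw [uIcc_of_le zero_le_one]; norm_num
  refine ⟨vt, fun x => g (1/2) + ∫ z in (1/2)..x, w z, h1, h2, h3, h4, ?_, ?_, ?_⟩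
  · intro x hx
    have := h6 x hx (1/2) (by norm_num)
    have h8 := h5 x hx
    rw [show g x = g (1/2) + ∫ z in (1/2)..x, w z by rw [← this]; ring] at h8
    exact h8
  · have h7 := hw.absolutelyContinuousOnInterval_intervalIntegral hh
    have h8 : AbsolutelyContinuousOnInterval (fun _ : ℝ => g (1/2)) 0 1 := by
      simp [absolutelyContinuousOnInterval_iff]
      intro ε hε; exact ⟨1, one_pos, fun _ _ _ _ => hε⟩
    exact h8.add h7
  · rw [ae_μ01_iff]
    filter_upwards [hw.ae_hasDerivAt_integral] with x hx hx'
    exact (hx (by rw [uIcc_of_le zero_le_one]; exact Ioo_subset_Icc_self hx') _ hh).const_add _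

lemma ibp {g w ψ ψ' : ℝ → ℝ} (hg : AbsolutelyContinuousOnInterval g 0 1)
    (hw : ∀ᵐ x ∂μ01, HasDerivAt g (w x) x)
    (hf : ContinuousOn ψ (Icc 0 1))
    (hd : ∀ x ∈ Ioo (0:ℝ) 1, HasDerivAt ψ (ψ' x) x) (hf' : ContinuousOn ψ' (Icc 0 1)) :
    ∫ x, w x * ψ x ∂μ01 = ψ 1 * g 1 - ψ 0 * g 0 - ∫ x, ψ' x * g x ∂μ01 := by
  have h := (AC_of_C1 hf hd hf').integral_mul_deriv_eq_deriv_mul hg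
  rw [← integral_μ01, ← integral_μ01] at h
  rw [show ∫ x, w x * ψ x ∂μ01 = ∫ x, ψ x * deriv g x ∂μ01 from ?_, h]
  · congr 1
    apply integral_congr_ae
    rw [Filter.EventuallyEq, ae_μ01_iff]
    filter_upwards with x hx
    rw [(hd x hx).deriv]
  · apply integral_congr_ae
    filter_upwards [hw] with x hx
    rw [hx.deriv, mul_comm]

lemma domA_sub {v w v' w' : Hsp} (h : InDomainA v w) (h' : InDomainA v' w') :
    InDomainA (v - v') (w - w') := by
  obtain ⟨vt, h1, h2, h3, h4, g, h5, h6⟩ := h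
  obtain ⟨vt', h1', h2', h3', h4', g', h5', h6'⟩ := h'
  refine ⟨fun x => vt x - vt' x, h1.sub h1', by simp [h2, h2'], by simp [h3, h3'], ?_,
    fun x => g x - g' x, fun x hx => (h5 x hx).sub (h5' x hx), ?_⟩
  · filter_upwards [h4, h4', Lp.coeFn_sub v v'] with x a b c
    rw [a, b, c]; rfl
  · intro x hx y hy
    have hsub : uIcc y x ⊆ Ioo 0 1 := by
      intro z hz
      rcases le_total x y with hxy | hxy
      · rw [uIcc_of_ge hxy] at hz; exact ⟨hx.1.trans_le hz.1, hz.2.trans_lt hy.2⟩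
      · rw [uIcc_of_le hxy] at hz; exact ⟨hy.1.trans_le hz.1, hz.2.trans_lt hx.2⟩
    have hsub' : uIcc y x ⊆ uIcc 0 1 := by
      rw [uIcc_of_le (zero_le_one (α := ℝ))]; exact hsub.trans Ioo_subset_Icc_self
    have e : ∫ z in y..x, (w - w' : Hsp) z = ∫ z in y..x, (w z - w' z) := by
      apply intervalIntegral.integral_congr_ae
      filter_upwards [ae_μ01_iff.1 (Lp.coeFn_sub w w')] with z hz hz'
      rw [hz (hsub (uIoc_subset_uIcc hz'))]; rfl
    rw [e, intervalIntegral.integral_sub ((intervalIntegrable_Hsp w).mono_set hsub')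
      ((intervalIntegrable_Hsp w').mono_set hsub'), ← h6 x hx y hy, ← h6' x hx y hy]
    ring

lemma domA_sin {v w : Hsp} (h : InDomainA v w) (k : ℝ) (hk : Real.sin (k * Real.pi) = 0) :
    ∫ x, w x * Real.sin (k * Real.pi * x) ∂μ01
      = -(k * Real.pi)^2 * ∫ x, v x * Real.sin (k * Real.pi * x) ∂μ01 := by
  obtain ⟨vt, g, h1, h2, h3, h4, h5, h6, h7⟩ := domA_rep h
  have hgc : ContinuousOn g (Icc 0 1) := by simpa using h6.continuousOn
  set c := k * Real.pi with hc
  have d1 : ∀ x, HasDerivAt (fun x => Real.sin (c * x)) (c * Real.cos (c * x)) x := by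
    intro x
    have := (Real.hasDerivAt_sin (c * x)).comp x ((hasDerivAt_id x).const_mul c)
    simpa [mul_comm, Function.comp_def] using this
  have d2 : ∀ x, HasDerivAt (fun x => c * Real.cos (c * x)) (-c^2 * Real.sin (c * x)) x := by
    intro x
    have := ((Real.hasDerivAt_cos (c * x)).comp x ((hasDerivAt_id x).const_mul c)).const_mul c
    refine this.congr_deriv ?_
    ring
  have c1 : Continuous (fun x => Real.sin (c * x)) := by fun_prop
  have c2 : Continuous (fun x => c * Real.cos (c * x)) := by fun_prop
  have c3 : Continuous (fun x => -c^2 * Real.sin (c * x)) := by fun_prop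
  have e1 := ibp h6 h7 c1.continuousOn (fun x _ => d1 x) c2.continuousOn
  have acc : AbsolutelyContinuousOnInterval (fun x => c * Real.cos (c * x)) 0 1 :=
    AC_of_C1 c2.continuousOn (fun x _ => d2 x) c3.continuousOn
  have e2 := ibp (w := fun x => -c^2 * Real.sin (c * x)) acc
    (Filter.Eventually.of_forall fun x => d2 x) h1 h5 hgc
  rw [e1]
  simp only [mul_one, hk, mul_zero, Real.sin_zero, zero_mul, sub_self, zero_sub, h2, h3] at e2 ⊢
  rw [show ∫ x, c * Real.cos (c * x) * g x ∂μ01 = ∫ x, g x * (c * Real.cos (c * x)) ∂μ01 by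
    simp only [mul_comm], ← e2, ← integral_const_mul]
  apply integral_congr_ae
  filter_upwards [h4] with x hx
  rw [hx]; ring

lemma domA_neg {v w : Hsp} (h : InDomainA v w) :
    0 ≤ ∫ x, w x * max (- v x) 0 ∂μ01 := by
  obtain ⟨vt, g, h1, h2, h3, h4, h5, h6, h7⟩ := domA_rep h
  have hgc : ContinuousOn g (Icc 0 1) := by simpa using h6.continuousOn
  have hwi : Integrable (w : ℝ → ℝ) μ01 := (Lp.memLp w).integrable (by norm_num)
  have sqpos : ∀ ε > (0:ℝ), ∀ s : ℝ, 0 < s^2 + ε^2 := fun ε hε s => by positivity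
  -- smoothing
  have main : ∀ ε > (0:ℝ), 0 ≤ ∫ x, w x * ((Real.sqrt (vt x ^2 + ε^2) - vt x - ε) / 2) ∂μ01 := by
    intro ε hε
    have dψ : ∀ x ∈ Ioo (0:ℝ) 1, HasDerivAt
        (fun x => (Real.sqrt (vt x ^2 + ε^2) - vt x - ε) / 2)
        ((vt x / Real.sqrt (vt x ^2 + ε^2) - 1) / 2 * g x) x := by
      intro x hx
      have a := (((h5 x hx).pow 2).add_const (ε^2)).sqrt (sqpos ε hε (vt x)).ne'
      have b := ((a.sub (h5 x hx)).sub_const ε).div_const 2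
      refine b.congr_deriv ?_
      have : Real.sqrt (vt x ^2 + ε^2) ≠ 0 := (Real.sqrt_pos.2 (sqpos ε hε _)).ne'
      simp only [Pi.pow_apply]
      field_simp
      simp; try ring
    have cs : ContinuousOn (fun x => Real.sqrt (vt x ^2 + ε^2)) (Icc 0 1) := by fun_prop
    have cψ : ContinuousOn (fun x => (Real.sqrt (vt x ^2 + ε^2) - vt x - ε) / 2) (Icc 0 1) := by
      fun_prop
    have cψ' : ContinuousOn (fun x => (vt x / Real.sqrt (vt x ^2 + ε^2) - 1) / 2 * g x)
        (Icc 0 1) :=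
      (((h1.div cs (fun x _ => (Real.sqrt_pos.2 (sqpos ε hε _)).ne')).sub
        continuousOn_const).div_const 2).mul hgc
    have e := ibp h6 h7 cψ dψ cψ'
    rw [e]
    have s0 : Real.sqrt ((0:ℝ)^2 + ε^2) = ε := by simp [hε.le]
    rw [h2, h3, s0]
    simp only [sub_zero, sub_self, zero_div, zero_mul, zero_sub]
    rw [← integral_neg]
    apply integral_nonneg
    intro x
    have : vt x / Real.sqrt (vt x ^2 + ε^2) ≤ 1 := by
      apply div_le_one_of_le₀ _ (Real.sqrt_nonneg _)
      apply Real.le_sqrt_of_sq_le; nlinarith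
    have h2 : 0 ≤ (1 - vt x / Real.sqrt (vt x ^2 + ε^2)) / 2 * (g x * g x) :=
      mul_nonneg (by linarith) (mul_self_nonneg _)
    simp only [Pi.zero_apply]
    linarith
  have close : ∀ ε > (0:ℝ), ∀ s : ℝ, |(Real.sqrt (s^2+ε^2) - s - ε)/2 - max (-s) 0| ≤ ε := by
    intro ε hε s
    have a1 : |s| ≤ Real.sqrt (s^2+ε^2) := Real.abs_le_sqrt (by nlinarith)
    have a2 : Real.sqrt (s^2+ε^2) ≤ |s| + ε := by
      rw [Real.sqrt_le_left (by positivity)]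
      nlinarith [abs_nonneg s, sq_abs s]
    have a3 : max (-s) 0 = (|s| - s)/2 := by
      rcases le_total 0 s with h | h
      · rw [abs_of_nonneg h, max_eq_right (by linarith)]; ring
      · rw [abs_of_nonpos h, max_eq_left (by linarith)]; ring
    rw [a3, abs_le]; constructor <;> linarith
  have hI : ∫ x, w x * max (- v x) 0 ∂μ01 = ∫ x, w x * max (- vt x) 0 ∂μ01 := by
    apply integral_congr_ae
    filter_upwards [h4] with x hx
    rw [hx]
  rw [hI]
  have hint : ∀ φ : ℝ → ℝ, ContinuousOn φ (Icc 0 1) → Integrable (fun x => w x * φ x) μ01 := by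
    intro φ hφ
    have := (intervalIntegrable_Hsp w).mul_continuousOn (g := φ) (by simpa using hφ)
    rw [intervalIntegrable_iff_integrableOn_Ioo_of_le zero_le_one] at this
    exact this
  have est : ∀ ε > (0:ℝ), -(ε * ∫ x, |w x| ∂μ01) ≤ ∫ x, w x * max (- vt x) 0 ∂μ01 := by
    intro ε hε
    have m := main ε hε
    have i1 := hint (fun x => (Real.sqrt (vt x ^2 + ε^2) - vt x - ε) / 2) (by fun_prop)
    have i2 := hint (fun x => max (- vt x) 0) (by fun_prop)
    have : ∫ x, w x * ((Real.sqrt (vt x ^2 + ε^2) - vt x - ε) / 2) ∂μ01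
        ≤ ∫ x, (w x * max (- vt x) 0 + ε * |w x|) ∂μ01 := by
      apply integral_mono i1 (i2.add (hwi.abs.const_mul ε))
      intro x
      change _ ≤ w x * max (- vt x) 0 + ε * |w x|
      have c := close ε hε (vt x)
      have : w x * ((Real.sqrt (vt x ^2 + ε^2) - vt x - ε) / 2 - max (- vt x) 0) ≤ ε * |w x| := by
        refine (le_abs_self _).trans ?_
        rw [abs_mul, mul_comm]
        exact mul_le_mul_of_nonneg_right c (abs_nonneg _)
      linarith
    rw [integral_add i2 (hwi.abs.const_mul ε), integral_const_mul] at this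
    linarith
  set I := ∫ x, |w x| ∂μ01
  have hI0 : 0 ≤ I := integral_nonneg fun x => abs_nonneg _
  by_contra hneg
  push Not at hneg
  set J := ∫ x, w x * max (- vt x) 0 ∂μ01
  have := est (-J / (2 * (I + 1))) (by apply div_pos <;> linarith)
  have h3 : -J / (2 * (I + 1)) * I ≤ -J/2 := by
    rw [div_mul_eq_mul_div, div_le_iff₀ (by linarith)]
    nlinarith
  linarith

lemma domA_zero {v w : Hsp} (h : InDomainA v w) (hv : ∀ᵐ x ∂μ01, 0 ≤ v x) :
    ∀ᵐ x ∂μ01, v x = 0 → w x = 0 := by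
  obtain ⟨vt, g, h1, h2, h3, h4, h5, h6, h7⟩ := domA_rep h
  have hpos : ∀ x ∈ Ioo (0:ℝ) 1, 0 ≤ vt x := by
    intro x hx
    by_contra hneg
    push Not at hneg
    have hc : ContinuousAt vt x := (h5 x hx).continuousAt
    have ev : ∀ᶠ y in nhds x, vt y < 0 ∧ y ∈ Ioo (0:ℝ) 1 :=
      (hc.eventually (gt_mem_nhds hneg)).and (isOpen_Ioo.mem_nhds hx)
    have h8 : ∀ᵐ y, y ∈ Ioo (0:ℝ) 1 → ¬ vt y < 0 := by
      rw [← ae_μ01_iff]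
      filter_upwards [hv, h4] with y a b
      rw [b]; linarith
    have hfr : ∃ᶠ y in nhds x, (y ∈ Ioo (0:ℝ) 1 → ¬ vt y < 0) := by
      have : Dense {y | y ∈ Ioo (0:ℝ) 1 → ¬ vt y < 0} := Measure.dense_of_ae h8
      exact mem_closure_iff_frequently.1 (this x)
    obtain ⟨y, hy, hy'⟩ := (hfr.and_eventually ev).exists
    exact hy hy'.2 hy'.1
  set Z : Set ℝ := {x | x ∈ Ioo (0:ℝ) 1 ∧ vt x = 0} with hZ
  have hgZ : ∀ x ∈ Z, g x = 0 := by
    intro x hx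
    have : IsLocalMin vt x := by
      filter_upwards [isOpen_Ioo.mem_nhds hx.1] with y hy
      rw [hx.2]; exact hpos y hy
    exact this.hasDerivAt_eq_zero (h5 x hx.1)
  have hcount := (countable_setOfPred_isolated_right_within (s := Z)).ae_notMem volume
  have h7' := ae_μ01_iff.1 h7
  rw [ae_μ01_iff] at h4 ⊢
  filter_upwards [h4, h7', hcount] with x a b c hx hvx
  have hxZ : x ∈ Z := ⟨hx, by rw [a hx, hvx]⟩
  have hne : (nhdsWithin x (Z ∩ Ioi x)).NeBot := ⟨fun hb => c ⟨hxZ, hb⟩⟩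
  have hd := (hasDerivAt_iff_tendsto_slope.1 (b hx))
  have hd2 : Filter.Tendsto (slope g x) (nhdsWithin x (Z ∩ Ioi x)) (nhds (w x)) :=
    hd.mono_left (nhdsWithin_mono _ fun y hy => by
      simp only [mem_compl_iff, mem_singleton_iff]; exact (ne_of_gt hy.2))
  refine tendsto_nhds_unique hd2 (tendsto_const_nhds.congr' ?_)
  filter_upwards [self_mem_nhdsWithin] with y hy
  simp [slope, hgZ x hxZ, hgZ y hy.1]

/-- Negative part in `H`. -/
def NP (z : Hsp) : Hsp := (-z) ⊔ 0

lemma NP_ae (z : Hsp) : ∀ᵐ x ∂μ01, NP z x = max (- z x) 0 := by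
  filter_upwards [Lp.coeFn_sup (-z) 0, Lp.coeFn_neg z, Lp.coeFn_zero ℝ 2 μ01] with x a b c
  simp only [NP]
  rw [a, Pi.sup_apply, b, c]; rfl

lemma inner_Hsp (f g : Hsp) : inner ℝ f g = ∫ x, g x * f x ∂μ01 := by
  rw [L2.inner_def]; rfl

lemma integrable_mul_Hsp (f g : Hsp) : Integrable (fun x => g x * f x) μ01 :=
  L2.integrable_inner (𝕜 := ℝ) f g

lemma normsq_Hsp (f : Hsp) : ‖f‖^2 = ∫ x, f x * f x ∂μ01 := by
  rw [← real_inner_self_eq_norm_sq, inner_Hsp]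

lemma NP_lip (y z : Hsp) : ‖NP y - NP z‖ ≤ ‖y - z‖ := by
  apply Lp.norm_le_norm_of_ae_le
  filter_upwards [NP_ae y, NP_ae z, Lp.coeFn_sub y z, Lp.coeFn_sub (NP y) (NP z)] with x a b c d
  rw [c, d, Pi.sub_apply, Pi.sub_apply, a, b, Real.norm_eq_abs, Real.norm_eq_abs]
  refine (abs_max_sub_max_le_abs _ _ _).trans ?_
  rw [show -y x - -z x = -(y x - z x) by ring, abs_neg]

lemma NP_est (z h : Hsp) :
    |‖NP (z + h)‖^2 - ‖NP z‖^2 + 2 * inner ℝ (NP z) h| ≤ ‖h‖^2 := by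
  have e : ‖NP (z + h)‖^2 - ‖NP z‖^2 + 2 * inner ℝ (NP z) h
      = ∫ x, (NP (z+h) x * NP (z+h) x - NP z x * NP z x + 2 * (h x * NP z x)) ∂μ01 := by
    have hs : Integrable (fun x => NP (z+h) x * NP (z+h) x - NP z x * NP z x) μ01 :=
      (integrable_mul_Hsp _ _).sub (integrable_mul_Hsp _ _)
    rw [integral_add hs ((integrable_mul_Hsp _ _).const_mul 2), integral_sub (integrable_mul_Hsp _ _)
      (integrable_mul_Hsp _ _), integral_const_mul, normsq_Hsp, normsq_Hsp, inner_Hsp]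
  have hi : Integrable (fun x => NP (z+h) x * NP (z+h) x - NP z x * NP z x
      + 2 * (h x * NP z x)) μ01 := (((integrable_mul_Hsp (NP (z+h)) (NP (z+h))).sub
    (integrable_mul_Hsp (NP z) (NP z))).add ((integrable_mul_Hsp (NP z) h).const_mul 2))
  rw [e]
  refine (abs_integral_le_integral_abs).trans ?_
  rw [normsq_Hsp h]
  apply integral_mono_ae hi.abs (integrable_mul_Hsp h h)
  filter_upwards [NP_ae z, NP_ae (z+h), Lp.coeFn_add z h] with x a b c
  rw [a, b, c, Pi.add_apply]
  generalize z x = p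
  generalize h x = q
  rw [abs_le]
  rcases le_total 0 p with h1 | h1 <;> rcases le_total 0 (p+q) with h2 | h2
  · rw [max_eq_right (by linarith), max_eq_right (by linarith)]
    constructor <;> nlinarith
  · rw [max_eq_left (by linarith), max_eq_right (by linarith)]
    constructor <;> nlinarith
  · rw [max_eq_right (by linarith), max_eq_left (by linarith)]
    constructor <;> nlinarith
  · rw [max_eq_left (by linarith), max_eq_left (by linarith)]
    constructor <;> nlinarith

lemma NP_hasFDerivAt (z : Hsp) :
    HasFDerivAt (fun y : Hsp => ‖NP y‖^2) ((-2:ℝ) • innerSL ℝ (NP z)) z := by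
  rw [hasFDerivAt_iff_isLittleO_nhds_zero]
  refine Asymptotics.IsBigO.trans_isLittleO (g := fun h : Hsp => ‖h‖^2) ?_
    (Asymptotics.isLittleO_norm_pow_id one_lt_two)
  apply Asymptotics.IsBigO.of_bound 1
  filter_upwards with h
  have := NP_est z h
  rw [one_mul, Real.norm_eq_abs, Real.norm_eq_abs, abs_of_nonneg (sq_nonneg ‖h‖)]
  convert this using 2
  simp

lemma AC_of_dist_le {f G : ℝ → ℝ} {a b C : ℝ} (hG : AbsolutelyContinuousOnInterval G a b)
    (h : ∀ x ∈ uIcc a b, ∀ y ∈ uIcc a b, dist (f x) (f y) ≤ C * dist (G x) (G y)) :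
    AbsolutelyContinuousOnInterval f a b := by
  rw [absolutelyContinuousOnInterval_iff] at hG ⊢
  intro ε hε
  obtain ⟨δ, hδ, H⟩ := hG (ε / (|C| + 1)) (by positivity)
  refine ⟨δ, hδ, fun E hE hE2 => ?_⟩
  have h3 := H E hE hE2
  calc _ ≤ ∑ i ∈ Finset.range E.1, (|C| + 1) * dist (G (E.2 i).1) (G (E.2 i).2) := by
        apply Finset.sum_le_sum
        intro i hi
        have := hE.1 i hi
        refine (h _ this.1 _ this.2).trans ?_
        apply mul_le_mul_of_nonneg_right _ dist_nonneg
        linarith [le_abs_self C]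
    _ = (|C| + 1) * ∑ i ∈ Finset.range E.1, dist (G (E.2 i).1) (G (E.2 i).2) := by
        rw [Finset.mul_sum]
    _ < (|C| + 1) * (ε / (|C| + 1)) := by
        apply mul_lt_mul_of_pos_left h3 (by positivity)
    _ = ε := by field_simp

/-- a.e. differentiability in time -/
lemma ae_hasDerivAt_of_fund {z z' : ℝ → Hsp} {a b : ℝ} (hab : a < b)
    (hi : IntervalIntegrable z' volume a b)
    (hf : ∀ t ∈ Icc a b, z t = z a + ∫ s in a..t, z' s) :
    ∀ᵐ t, t ∈ Ioo a b → HasDerivAt z (z' t) t := by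
  filter_upwards [hi.ae_hasDerivAt_integral] with t ht htt
  have h1 := (ht (by rw [uIcc_of_le hab.le]; exact Ioo_subset_Icc_self htt) a (by simp)).const_add
    (z a)
  refine h1.congr_of_eventuallyEq ?_
  filter_upwards [isOpen_Ioo.mem_nhds htt] with y hy
  exact hf y (Ioo_subset_Icc_self hy)

lemma comparison {z z' zxx : ℝ → Hsp} {s T K : ℝ} (hsT : s < T)
    (hc : ContinuousOn z (Icc s T))
    (hfund : ∀ T1, s < T1 → T1 < T → IntervalIntegrable z' volume T1 T ∧
      ∀ t ∈ Icc T1 T, z t = z T1 + ∫ σ in T1..t, z' σ)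
    (hdom : ∀ᵐ t, t ∈ Ioo s T → InDomainA (z t) (zxx t))
    (hineq : ∀ᵐ t, t ∈ Ioo s T → ∀ᵐ x ∂μ01, z t x < 0 → zxx t x + K * z t x ≤ z' t x)
    (h0 : ∀ᵐ x ∂μ01, 0 ≤ z s x) : ∀ᵐ x ∂μ01, 0 ≤ z T x := by
  set N : ℝ → ℝ := fun t => ‖NP (z t)‖^2 with hN
  have hNPc : Continuous NP := by
    have : LipschitzWith 1 NP := LipschitzWith.of_dist_le_mul fun a b => by
      simpa [dist_eq_norm] using NP_lip a b
    exact this.continuous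
  have hNc : ContinuousOn N (Icc s T) := ((hNPc.comp_continuousOn hc).norm).pow 2
  -- main inequality
  have key : ∀ T1, s < T1 → T1 < T → Real.exp (-2*K*T) * N T ≤ Real.exp (-2*K*T1) * N T1 := by
    intro T1 h1 h2
    obtain ⟨hi, hf⟩ := hfund T1 h1 h2
    have hder := ae_hasDerivAt_of_fund h2 hi hf
    have hsub : Icc T1 T ⊆ Icc s T := Icc_subset_Icc h1.le le_rfl
    obtain ⟨C, hC⟩ := isCompact_Icc.exists_bound_of_continuousOn
      ((hNPc.comp_continuousOn hc).mono hsub)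
    have hni : IntervalIntegrable (fun t => ‖z' t‖) volume T1 T := hi.norm
    have hG := hni.absolutelyContinuousOnInterval_intervalIntegral (c := T1) (by simp)
    have hzd : ∀ x ∈ Icc T1 T, ∀ y ∈ Icc T1 T, ‖z x - z y‖ ≤
        dist (∫ t in T1..x, ‖z' t‖) (∫ t in T1..y, ‖z' t‖) := by
      intro x hx y hy
      have ix : IntervalIntegrable z' volume T1 x := hi.mono_set (by
        rw [uIcc_of_le hx.1, uIcc_of_le h2.le]; exact Icc_subset_Icc le_rfl hx.2)
      have iy : IntervalIntegrable z' volume T1 y := hi.mono_set (by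
        rw [uIcc_of_le hy.1, uIcc_of_le h2.le]; exact Icc_subset_Icc le_rfl hy.2)
      rw [hf x hx, hf y hy, add_sub_add_left_eq_sub,
        intervalIntegral.integral_interval_sub_left ix iy, Real.dist_eq,
        intervalIntegral.integral_interval_sub_left ix.norm iy.norm]
      exact intervalIntegral.norm_integral_le_abs_integral_norm
    have hNAC : AbsolutelyContinuousOnInterval N T1 T := by
      apply AC_of_dist_le (C := 2 * C) hG
      rw [uIcc_of_le h2.le]
      intro x hx y hy
      have a1 := hC x hx
      have a2 := hC y hy
      have a3 := (abs_norm_sub_norm_le (NP (z x)) (NP (z y))).trans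
        ((NP_lip _ _).trans (hzd x hx y hy))
      simp only [Function.comp] at a1 a2
      rw [Real.dist_eq]
      have : N x - N y = (‖NP (z x)‖ + ‖NP (z y)‖) * (‖NP (z x)‖ - ‖NP (z y)‖) := by
        simp only [hN]; ring
      rw [this, abs_mul, abs_of_nonneg (by positivity)]
      apply mul_le_mul (by linarith) a3 (abs_nonneg _)
      linarith [norm_nonneg (NP (z x))]
    have hEAC : AbsolutelyContinuousOnInterval (fun t => Real.exp (-2*K*t)) T1 T := by
      apply ContDiffOn.absolutelyContinuousOnInterval
      apply ContDiff.contDiffOn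
      fun_prop
    have hprod := hEAC.fun_mul hNAC
    have hint := hprod.integral_deriv_eq_sub
    have hle : ∫ t in T1..T, deriv (fun t => Real.exp (-2*K*t) * N t) t ≤ 0 := by
      rw [intervalIntegral.integral_of_le h2.le, integral_Ioc_eq_integral_Ioo]
      apply integral_nonpos_of_ae
      rw [Filter.EventuallyLE, ae_restrict_iff' measurableSet_Ioo]
      filter_upwards [hder, hdom, hineq] with t d1 d2 d3 ht
      have hts : t ∈ Ioo s T := ⟨h1.trans ht.1, ht.2⟩
      have dN : HasDerivAt N (-2 * inner ℝ (NP (z t)) (z' t)) t := by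
        have := (NP_hasFDerivAt (z t)).comp_hasDerivAt t (d1 ht)
        refine HasDerivAt.congr_deriv this ?_
        simp
      have dE : HasDerivAt (fun t => Real.exp (-2*K*t)) (Real.exp (-2*K*t) * (-2*K)) t := by
        have := ((hasDerivAt_id t).const_mul (-2*K)).exp
        simpa using this
      have dd := dE.mul dN
      have dd' : deriv (fun t => Real.exp (-2*K*t) * N t) t = _ := dd.deriv
      rw [dd']
      have hin : - K * N t ≤ inner ℝ (NP (z t)) (z' t) := by
        have e1 : N t = ∫ x, NP (z t) x * NP (z t) x ∂μ01 := normsq_Hsp _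
        have e2 : 0 ≤ ∫ x, zxx t x * NP (z t) x ∂μ01 := by
          refine (domA_neg (d2 hts)).trans_eq ?_
          apply integral_congr_ae
          filter_upwards [NP_ae (z t)] with x hx
          rw [hx]
        have e3 : ∫ x, (zxx t x * NP (z t) x + (-K) * (NP (z t) x * NP (z t) x)) ∂μ01
            ≤ ∫ x, z' t x * NP (z t) x ∂μ01 := by
          apply integral_mono_ae ((integrable_mul_Hsp _ _).add
            ((integrable_mul_Hsp _ _).const_mul _)) (integrable_mul_Hsp _ _)
          filter_upwards [NP_ae (z t), d3 hts] with x hx hx2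
          change zxx t x * NP (z t) x + (-K) * (NP (z t) x * NP (z t) x) ≤ _
          rw [hx]
          rcases lt_or_ge (z t x) 0 with h | h
          · rw [max_eq_left (by linarith)]
            have := hx2 h
            nlinarith
          · rw [max_eq_right (by linarith)]; simp
        rw [integral_add (integrable_mul_Hsp _ _) ((integrable_mul_Hsp _ _).const_mul _),
          integral_const_mul, ← e1] at e3
        rw [inner_Hsp]; linarith
      have := Real.exp_pos (-2*K*t)
      simp only [Pi.zero_apply]
      nlinarith
    rw [hint] at hle
    linarith
  have hN0 : N s = 0 := by
    have : NP (z s) = 0 := by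
      rw [Lp.eq_zero_iff_ae_eq_zero]
      filter_upwards [NP_ae (z s), h0] with x a b
      rw [a, max_eq_right (by linarith)]; rfl
    simp [hN, this]
  have hlim : Filter.Tendsto (fun t => Real.exp (-2*K*t) * N t) (nhdsWithin s (Ioo s T))
      (nhds (Real.exp (-2*K*s) * N s)) := by
    have h1 : ContinuousOn (fun t => Real.exp (-2*K*t) * N t) (Icc s T) :=
      ContinuousOn.mul (by fun_prop) hNc
    exact (h1 s (left_mem_Icc.2 hsT.le)).mono_left (nhdsWithin_mono _ Ioo_subset_Icc_self)
  rw [hN0, mul_zero] at hlim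
  have : (nhdsWithin s (Ioo s T)).NeBot := by
    rw [nhdsWithin_Ioo_eq_nhdsGT hsT]; infer_instance
  have hfin : Real.exp (-2*K*T) * N T ≤ 0 := by
    apply ge_of_tendsto hlim
    filter_upwards [self_mem_nhdsWithin] with t ht
    exact key t ht.1 ht.2
  have hNT : N T = 0 := by
    have a := Real.exp_pos (-2*K*T)
    have b : 0 ≤ N T := sq_nonneg _
    nlinarith
  have hz : NP (z T) = 0 := by simpa [hN] using hNT
  rw [Lp.eq_zero_iff_ae_eq_zero] at hz
  filter_upwards [hz, NP_ae (z T)] with x a b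
  rw [b] at a
  have : - z T x ≤ 0 := by
    have := le_max_left (- z T x) 0
    rw [a] at this; exact this
  linarith

lemma le_of_ae_le_cont {f g : ℝ → ℝ} (hf : ContinuousOn f (Ioo 0 1)) (hg : ContinuousOn g (Ioo 0 1))
    (h : ∀ᵐ x ∂μ01, f x ≤ g x) : ∀ x ∈ Ioo (0:ℝ) 1, f x ≤ g x := by
  intro x hx
  by_contra hneg
  push Not at hneg
  have hx' := isOpen_Ioo.mem_nhds hx
  have ev : ∀ᶠ y in nhds x, g y < f y ∧ y ∈ Ioo (0:ℝ) 1 :=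
    ((hg.continuousAt hx').eventually_lt (hf.continuousAt hx') hneg).and hx'
  have hfr : ∃ᶠ y in nhds x, (y ∈ Ioo (0:ℝ) 1 → f y ≤ g y) := by
    have : Dense {y | y ∈ Ioo (0:ℝ) 1 → f y ≤ g y} := Measure.dense_of_ae (ae_μ01_iff.1 h)
    exact mem_closure_iff_frequently.1 (this x)
  obtain ⟨y, hy, hy'⟩ := (hfr.and_eventually ev).exists
  exact absurd (hy hy'.2) (not_le.2 hy'.1)

lemma deriv_nonneg_on_zero {u : ℝ → Hsp} {d : Hsp} {t : ℝ} (h : HasDerivAt u d t)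
    (hn : ∀ s, t ≤ s → ∀ᵐ x ∂μ01, 0 ≤ u s x) : ∀ᵐ x ∂μ01, u t x = 0 → 0 ≤ d x := by
  rw [hasDerivAt_iff_tendsto_slope_zero] at h
  have hseq : Filter.Tendsto (fun n : ℕ => 1 / ((n:ℝ) + 1)) Filter.atTop (nhdsWithin 0 {0}ᶜ) := by
    rw [tendsto_nhdsWithin_iff]
    refine ⟨tendsto_one_div_add_atTop_nhds_zero_nat, Filter.Eventually.of_forall fun n => ?_⟩
    simp; positivity
  have h2 := h.comp hseq
  obtain ⟨φ, -, hφ⟩ := (tendstoInMeasure_of_tendsto_Lp h2).exists_seq_tendsto_ae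
  have e1 : ∀ᵐ x ∂μ01, ∀ n : ℕ, 0 ≤ u (t + 1/((n:ℝ)+1)) x :=
    ae_all_iff.2 fun n => hn _ (by have : (0:ℝ) < 1/((n:ℝ)+1) := by positivity
                                   linarith)
  have e2 : ∀ᵐ x ∂μ01, ∀ n : ℕ, ((1/((n:ℝ)+1))⁻¹ • (u (t + 1/((n:ℝ)+1)) - u t) : Hsp) x
      = (1/((n:ℝ)+1))⁻¹ * (u (t + 1/((n:ℝ)+1)) x - u t x) := by
    refine ae_all_iff.2 fun n => ?_
    filter_upwards [Lp.coeFn_smul (1/((n:ℝ)+1))⁻¹ (u (t + 1/((n:ℝ)+1)) - u t),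
      Lp.coeFn_sub (u (t + 1/((n:ℝ)+1))) (u t)] with x a b
    rw [a, Pi.smul_apply, b]; rfl
  filter_upwards [hφ, e1, e2] with x a b c hx
  refine ge_of_tendsto' a fun n => ?_
  simp only [Function.comp]
  rw [c, hx, sub_zero]
  exact mul_nonneg (by positivity) (b _)

/-! ### continuous functions as elements of `H` -/

lemma memLp_cont {φ : ℝ → ℝ} (h : Continuous φ) : MemLp φ 2 μ01 := by
  obtain ⟨C, hC⟩ := (isCompact_Icc (a := (0:ℝ)) (b := 1)).exists_bound_of_continuousOn
    h.continuousOn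
  refine MemLp.of_bound h.aestronglyMeasurable C ?_
  rw [ae_μ01_iff]
  exact Filter.Eventually.of_forall fun x hx => hC x (Ioo_subset_Icc_self hx)

/-- embedding of continuous functions -/
def toH (φ : ℝ → ℝ) (h : Continuous φ) : Hsp := (memLp_cont h).toLp φ

lemma toH_ae (φ : ℝ → ℝ) (h : Continuous φ) : ∀ᵐ x ∂μ01, toH φ h x = φ x :=
  MemLp.coeFn_toLp _

lemma norm_le_of_bound {f : Hsp} {C : ℝ} (hC : 0 ≤ C) (h : ∀ᵐ x ∂μ01, |f x| ≤ C) : ‖f‖ ≤ C := by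
  have := Lp.norm_le_of_ae_bound (f := f) hC h
  have e : measureUnivNNReal μ01 = 1 := by simp [measureUnivNNReal]
  rw [e] at this
  simpa using this

lemma unif_cont {F : ℝ → ℝ → ℝ} (hF : Continuous (fun p : ℝ × ℝ => F p.1 p.2)) (t₀ : ℝ) {ε : ℝ}
    (hε : 0 < ε) : ∀ᶠ t in nhds t₀, ∀ x ∈ Icc (0:ℝ) 1, |F t x - F t₀ x| < ε := by
  apply isCompact_Icc.eventually_forall_of_forall_eventually
  intro y hy
  have : Continuous (fun p : ℝ × ℝ => |F p.1 p.2 - F t₀ p.2|) :=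
    (hF.sub (hF.comp (by fun_prop : Continuous fun p : ℝ × ℝ => (t₀, p.2)))).abs
  have h2 := this.tendsto (t₀, y)
  simp only [sub_self, abs_zero] at h2
  exact h2.eventually (gt_mem_nhds hε)

lemma slice_cont {F : ℝ → ℝ → ℝ} (hF : Continuous (fun p : ℝ × ℝ => F p.1 p.2)) (t : ℝ) :
    Continuous (F t) := hF.comp (by fun_prop : Continuous fun x : ℝ => (t, x))

lemma toH_continuous {F : ℝ → ℝ → ℝ} (hF : Continuous (fun p : ℝ × ℝ => F p.1 p.2)) :
    Continuous (fun t => toH (F t) (slice_cont hF t)) := by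
  rw [continuous_iff_continuousAt]
  intro t₀
  rw [ContinuousAt, Metric.tendsto_nhds]
  intro ε hε
  filter_upwards [unif_cont hF t₀ (half_pos hε)] with t ht
  rw [dist_eq_norm]
  refine lt_of_le_of_lt (norm_le_of_bound (half_pos hε).le ?_) (half_lt_self hε)
  filter_upwards [toH_ae _ (slice_cont hF t), toH_ae _ (slice_cont hF t₀),
    Lp.coeFn_sub (toH _ (slice_cont hF t)) (toH _ (slice_cont hF t₀)),
    ae_μ01_iff.2 (Filter.Eventually.of_forall fun x hx => hx)] with x a b c d
  rw [c, Pi.sub_apply, a, b]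
  exact (ht x (Ioo_subset_Icc_self d)).le

lemma toH_hasDerivAt {F F' : ℝ → ℝ → ℝ} (hF : Continuous (fun p : ℝ × ℝ => F p.1 p.2))
    (hF' : Continuous (fun p : ℝ × ℝ => F' p.1 p.2))
    (hd : ∀ t x, HasDerivAt (fun t => F t x) (F' t x) t) (t₀ : ℝ) :
    HasDerivAt (fun t => toH (F t) (slice_cont hF t)) (toH (F' t₀) (slice_cont hF' t₀)) t₀ := by
  rw [hasDerivAt_iff_isLittleO, Asymptotics.isLittleO_iff]
  intro ε hε
  obtain ⟨δ, hδ, hb⟩ := Metric.eventually_nhds_iff_ball.1 (unif_cont hF' t₀ hε)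
  filter_upwards [Metric.ball_mem_nhds t₀ hδ] with t ht
  apply norm_le_of_bound (by positivity)
  filter_upwards [toH_ae _ (slice_cont hF t), toH_ae _ (slice_cont hF t₀),
    toH_ae _ (slice_cont hF' t₀),
    Lp.coeFn_sub (toH _ (slice_cont hF t)) (toH _ (slice_cont hF t₀)),
    Lp.coeFn_sub (toH _ (slice_cont hF t) - toH _ (slice_cont hF t₀))
      ((t - t₀) • toH _ (slice_cont hF' t₀)),
    Lp.coeFn_smul (t - t₀) (toH _ (slice_cont hF' t₀)),
    ae_μ01_iff.2 (Filter.Eventually.of_forall fun x hx => hx)] with x a b c d e f g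
  rw [e, Pi.sub_apply, d, Pi.sub_apply, f, Pi.smul_apply, a, b, c, smul_eq_mul]
  have := (convex_ball t₀ δ).norm_image_sub_le_of_norm_hasDerivWithin_le
    (f := fun t => F t x - t * F' t₀ x) (f' := fun t => F' t x - F' t₀ x) (C := ε) (x := t₀) (y := t)
    (fun y hy => (((hd y x).sub (by simpa using (hasDerivAt_id y).mul_const (F' t₀ x))).hasDerivWithinAt))
    (fun y hy => (hb y hy x (Ioo_subset_Icc_self g)).le)
    (Metric.mem_ball_self hδ) ht
  rw [Real.norm_eq_abs] at this
  convert this using 2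
  ring

lemma toH_fund {F F' : ℝ → ℝ → ℝ} (hF : Continuous (fun p : ℝ × ℝ => F p.1 p.2))
    (hF' : Continuous (fun p : ℝ × ℝ => F' p.1 p.2))
    (hd : ∀ t x, HasDerivAt (fun t => F t x) (F' t x) t) (a t : ℝ) :
    toH (F t) (slice_cont hF t) = toH (F a) (slice_cont hF a) +
      ∫ s in a..t, toH (F' s) (slice_cont hF' s) := by
  rw [intervalIntegral.integral_eq_sub_of_hasDerivAt
    (fun s _ => toH_hasDerivAt hF hF' hd s) ((toH_continuous hF').intervalIntegrable _ _)]
  abel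

/-! ### the barrier -/

lemma p3_deriv (y : ℝ) : HasDerivAt (fun y : ℝ => max y 0 ^ 3) (3 * max y 0 ^ 2) y := by
  rcases lt_trichotomy y 0 with h | h | h
  · rw [max_eq_right h.le]
    simp only [ne_eq, OfNat.ofNat_ne_zero, not_false_eq_true, zero_pow, mul_zero]
    refine (hasDerivAt_const y (0:ℝ)).congr_of_eventuallyEq ?_
    filter_upwards [gt_mem_nhds h] with z hz
    rw [max_eq_right hz.le]; simp
  · subst h
    simp only [max_self, ne_eq, OfNat.ofNat_ne_zero, not_false_eq_true, zero_pow, mul_zero]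
    rw [hasDerivAt_iff_isLittleO_nhds_zero]
    refine Asymptotics.IsBigO.trans_isLittleO (g := fun h : ℝ => ‖h‖^2) ?_
      (Asymptotics.isLittleO_norm_pow_id one_lt_two)
    apply Asymptotics.IsBigO.of_bound 1
    filter_upwards [Metric.ball_mem_nhds (0:ℝ) one_pos] with h hh
    rw [Metric.mem_ball, Real.dist_eq, sub_zero] at hh
    have h1 : max h 0 ≤ |h| := max_le (le_abs_self _) (abs_nonneg _)
    have h2 : 0 ≤ max h 0 := le_max_right _ _
    have h3 : max h 0 ^ 3 ≤ |h| ^ 3 := by gcongr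
    have h4 : |h|^3 ≤ |h|^2 := pow_le_pow_of_le_one (abs_nonneg _) hh.le (by norm_num)
    simp [abs_of_nonneg h2]
    rw [← sq_abs h]
    linarith
  · rw [max_eq_left h.le]
    refine (by simpa using hasDerivAt_pow 3 y : HasDerivAt (fun y : ℝ => y^3) (3 * y^2) y).congr_of_eventuallyEq ?_
    filter_upwards [lt_mem_nhds h] with z hz
    rw [max_eq_left hz.le]

lemma p2_deriv (y : ℝ) : HasDerivAt (fun y : ℝ => max y 0 ^ 2) (2 * max y 0) y := by
  rcases lt_trichotomy y 0 with h | h | h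
  · rw [max_eq_right h.le]
    simp only [mul_zero]
    refine (hasDerivAt_const y (0:ℝ)).congr_of_eventuallyEq ?_
    filter_upwards [gt_mem_nhds h] with z hz
    rw [max_eq_right hz.le]; simp
  · subst h
    simp only [max_self, mul_zero]
    rw [hasDerivAt_iff_isLittleO_nhds_zero]
    refine Asymptotics.IsBigO.trans_isLittleO (g := fun h : ℝ => ‖h‖^2) ?_
      (Asymptotics.isLittleO_norm_pow_id one_lt_two)
    apply Asymptotics.IsBigO.of_bound 1
    filter_upwards with h
    have h1 : max h 0 ≤ |h| := max_le (le_abs_self _) (abs_nonneg _)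
    have h2 : 0 ≤ max h 0 := le_max_right _ _
    have h3 : max h 0 ^ 2 ≤ |h| ^ 2 := by gcongr
    simp [abs_of_nonneg h2]
    rw [← sq_abs h]
    linarith
  · rw [max_eq_left h.le]
    refine (by simpa using hasDerivAt_pow 2 y : HasDerivAt (fun y : ℝ => y^2) (2 * y) y).congr_of_eventuallyEq ?_
    filter_upwards [lt_mem_nhds h] with z hz
    rw [max_eq_left hz.le]

section barrier
variable (A ρ c κ α s : ℝ)

/-- moving coordinate -/
def bX (t x : ℝ) : ℝ := x - c - κ * (t - s)
/-- profile -/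
def bQ (t x : ℝ) : ℝ := ρ^2 - (bX c κ s t x)^2
/-- barrier -/
def bF (t x : ℝ) : ℝ := A * Real.exp (-α * (t - s)) * max (bQ ρ c κ s t x) 0 ^ 3
/-- barrier, time derivative -/
def bFt (t x : ℝ) : ℝ := A * Real.exp (-α * (t - s)) *
  (-α * max (bQ ρ c κ s t x) 0 ^ 3 + 3 * max (bQ ρ c κ s t x) 0 ^ 2 * (2 * κ * bX c κ s t x))
/-- barrier, space derivative -/
def bFx (t x : ℝ) : ℝ := A * Real.exp (-α * (t - s)) *
  (3 * max (bQ ρ c κ s t x) 0 ^ 2 * (-2 * bX c κ s t x))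
/-- barrier, second space derivative -/
def bFxx (t x : ℝ) : ℝ := A * Real.exp (-α * (t - s)) *
  (24 * max (bQ ρ c κ s t x) 0 * (bX c κ s t x)^2 - 6 * max (bQ ρ c κ s t x) 0 ^ 2)

lemma bF_cont : Continuous (fun p : ℝ × ℝ => bF A ρ c κ α s p.1 p.2) := by
  unfold bF bQ bX; fun_prop
lemma bFt_cont : Continuous (fun p : ℝ × ℝ => bFt A ρ c κ α s p.1 p.2) := by
  unfold bFt bQ bX; fun_prop
lemma bFxx_cont : Continuous (fun p : ℝ × ℝ => bFxx A ρ c κ α s p.1 p.2) := by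
  unfold bFxx bQ bX; fun_prop

lemma bF_t (t x : ℝ) : HasDerivAt (fun t => bF A ρ c κ α s t x) (bFt A ρ c κ α s t x) t := by
  have hX : HasDerivAt (fun t => bX c κ s t x) (-κ) t := by
    have := (((hasDerivAt_id t).sub_const s).const_mul κ).const_sub (x - c)
    simpa [bX] using this
  have hQ : HasDerivAt (fun t => bQ ρ c κ s t x) (2 * κ * bX c κ s t x) t := by
    refine ((hX.pow 2).const_sub (ρ^2)).congr_deriv ?_
    simp; ring
  have hE : HasDerivAt (fun t => Real.exp (-α * (t - s))) (Real.exp (-α * (t - s)) * (-α)) t := by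
    have := (((hasDerivAt_id t).sub_const s).const_mul (-α)).exp
    simpa using this
  have hp := (p3_deriv (bQ ρ c κ s t x)).comp t hQ
  refine ((hE.const_mul A).mul hp).congr_deriv ?_
  simp only [Function.comp, bFt]; ring

lemma bQ_x (t x : ℝ) : HasDerivAt (fun x => bQ ρ c κ s t x) (-2 * bX c κ s t x) x := by
  have hX : HasDerivAt (fun x => bX c κ s t x) 1 x :=
    (((hasDerivAt_id x).sub_const c).sub_const _)
  refine ((hX.pow 2).const_sub (ρ^2)).congr_deriv ?_
  simp

lemma bF_x (t x : ℝ) : HasDerivAt (fun x => bF A ρ c κ α s t x) (bFx A ρ c κ α s t x) x := by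
  have hp := (p3_deriv (bQ ρ c κ s t x)).comp x (bQ_x ρ c κ s t x)
  exact hp.const_mul (A * Real.exp (-α * (t - s)))

lemma bF_xx (t x : ℝ) : HasDerivAt (fun x => bFx A ρ c κ α s t x) (bFxx A ρ c κ α s t x) x := by
  have hX : HasDerivAt (fun x => bX c κ s t x) 1 x :=
    (((hasDerivAt_id x).sub_const c).sub_const _)
  have hp := (((p2_deriv (bQ ρ c κ s t x)).comp x (bQ_x ρ c κ s t x)).const_mul 3).mul
    (hX.const_mul (-2))
  refine (hp.const_mul (A * Real.exp (-α * (t - s)))).congr_deriv ?_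
  simp only [Function.comp, bFxx]; ring

lemma bF_sub (hA : 0 ≤ A) (hρ : 0 < ρ) (hα : (30 + 6 * |κ| * ρ)^2 / (96 * ρ^2) ≤ α) (t x : ℝ) :
    bFt A ρ c κ α s t x ≤ bFxx A ρ c κ α s t x := by
  unfold bFt bFxx
  apply mul_le_mul_of_nonneg_left _ (by positivity)
  rcases le_total (bQ ρ c κ s t x) 0 with h | h
  · rw [max_eq_right h]; simp
  · rw [max_eq_left h]
    set q := bQ ρ c κ s t x with hq
    set ξ := bX c κ s t x
    have e : ξ^2 = ρ^2 - q := by rw [hq, bQ]; ring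
    have hξ : |ξ| ≤ ρ := by
      apply abs_le_of_sq_le_sq _ hρ.le; linarith
    have hkx : κ * ξ ≤ |κ| * ρ := (le_abs_self _).trans (by
      rw [abs_mul]; exact mul_le_mul_of_nonneg_left hξ (abs_nonneg _))
    set B := 30 + 6 * |κ| * ρ with hB
    have h1 : B^2 ≤ α * (96 * ρ^2) := by rwa [div_le_iff₀ (by positivity)] at hα
    have hquad : 0 ≤ α * q^2 - B * q + 24 * ρ^2 := by
      have : 0 ≤ 96 * ρ^2 * (α * q^2 - B * q + 24 * ρ^2) := by
        have : B^2 * q^2 ≤ α * (96 * ρ^2) * q^2 := mul_le_mul_of_nonneg_right h1 (sq_nonneg _)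
        nlinarith [sq_nonneg (B * q - 48 * ρ^2)]
      exact nonneg_of_mul_nonneg_right this (by positivity)
    have h2 : 0 ≤ q * (α * q^2 - B * q + 24 * ρ^2) := mul_nonneg h hquad
    have h3 : 6 * q^2 * (κ * ξ) ≤ 6 * q^2 * (|κ| * ρ) :=
      mul_le_mul_of_nonneg_left hkx (by positivity)
    rw [e]
    nlinarith

lemma bF_dom (t : ℝ) (h0 : bF A ρ c κ α s t 0 = 0) (h1 : bF A ρ c κ α s t 1 = 0) :
    InDomainA (toH (bF A ρ c κ α s t) (slice_cont (bF_cont A ρ c κ α s) t))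
      (toH (bFxx A ρ c κ α s t) (slice_cont (bFxx_cont A ρ c κ α s) t)) := by
  refine ⟨bF A ρ c κ α s t, (slice_cont (bF_cont A ρ c κ α s) t).continuousOn, h0, h1, ?_,
    bFx A ρ c κ α s t, fun x _ => bF_x A ρ c κ α s t x, ?_⟩
  · filter_upwards [toH_ae _ (slice_cont (bF_cont A ρ c κ α s) t)] with x hx
    rw [hx]
  · intro x hx y hy
    have hcc := slice_cont (bFxx_cont A ρ c κ α s) t
    rw [← intervalIntegral.integral_eq_sub_of_hasDerivAt
      (fun z _ => bF_xx A ρ c κ α s t z) (hcc.intervalIntegrable _ _)]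
    apply intervalIntegral.integral_congr_ae
    filter_upwards [ae_μ01_iff.1 (toH_ae _ hcc)] with z hz hz'
    rw [hz]
    have := uIoc_subset_uIcc hz'
    rcases le_total x y with hxy | hxy
    · rw [uIcc_of_ge hxy] at this; exact ⟨hx.1.trans_le this.1, this.2.trans_lt hy.2⟩
    · rw [uIcc_of_le hxy] at this; exact ⟨hy.1.trans_le this.1, this.2.trans_lt hx.2⟩

end barrier

lemma supersol {b ω : ℝ → ℝ} {b0 b1 ω0 ω1 τ : ℝ} (hC : Cond1 b ω b0 b1 ω0 ω1)
    {u r u' uxx : ℝ → Hsp} (hu : IsStrongSolutionWith b ω τ u r u' uxx) (hn : NonnegOn u τ)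
    {s T : ℝ} (hs : τ < s) (hsT : s < T) :
    ∀ᵐ t, t ∈ Ioo s T → ∀ᵐ x ∂μ01, uxx t x ≤ u' t x := by
  have f := hu.fund s T hs hsT
  have e1 := ae_hasDerivAt_of_fund hsT f.1 f.2
  have e2 := (ae_restrict_iff' measurableSet_Ioi).1 hu.sel
  have e3 := (ae_restrict_iff' measurableSet_Ioi).1 hu.dom
  have e4 := (ae_restrict_iff' measurableSet_Ioi).1 hu.eq
  filter_upwards [e1, e2, e3, e4] with t h1 h2 h3 h4 ht
  have htτ : τ < t := hs.trans ht.1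
  have n0 := hn t htτ.le
  have d0 := deriv_nonneg_on_zero (h1 ht) (fun s hs => hn s (htτ.le.trans hs))
  have d1 := domA_zero (h3 htτ) n0
  have c := Lp.coeFn_add (r t) (uxx t)
  rw [← h4 htτ] at c
  filter_upwards [n0, d0, d1, h2 htτ, c] with x a1 a2 a3 a4 a5
  rcases a1.eq_or_lt with h | h
  · rw [a3 h.symm]; exact a2 h.symm
  · obtain ⟨y, hy, e⟩ := a4
    have : y = 1 := by
      simpa [heaviside, not_lt.2 h.le, h.ne'] using hy
    subst this
    rw [a5, Pi.add_apply, e]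
    have b1 := hC.blb t
    have b2 := hC.b0pos
    have b3 := mul_nonneg (hC.ω0nonneg.trans (hC.ωlb t)) h.le
    linarith

lemma positivity_lemma {b ω : ℝ → ℝ} {b0 b1 ω0 ω1 τ : ℝ} (hC : Cond1 b ω b0 b1 ω0 ω1)
    {u r u' uxx : ℝ → Hsp} (hu : IsStrongSolutionWith b ω τ u r u' uxx) (hn : NonnegOn u τ)
    {s T : ℝ} (hs : τ < s) (hsT : s < T) {U0 UT : ℝ → ℝ}
    (hU0 : ContinuousOn U0 (Icc 0 1)) (hU0e : ∀ᵐ x ∂μ01, U0 x = u s x)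
    (hUT : ContinuousOn UT (Icc 0 1)) (hUTe : ∀ᵐ x ∂μ01, UT x = u T x)
    {x0 : ℝ} (hx0 : x0 ∈ Ioo (0:ℝ) 1) (hpos : 0 < U0 x0) :
    ∀ x1 ∈ Ioo (0:ℝ) 1, 0 < UT x1 := by
  intro x1 hx1
  have hat : ContinuousAt U0 x0 := hU0.continuousAt (Icc_mem_nhds hx0.1 hx0.2)
  set η := U0 x0 / 2 with hη
  have hη0 : 0 < η := half_pos hpos
  obtain ⟨ρ0, hρ0, hb0⟩ := Metric.eventually_nhds_iff_ball.1
    (hat.eventually (lt_mem_nhds (show η < U0 x0 by linarith)))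
  obtain ⟨ρ, hρ, r1, r2, r3, r4, r5⟩ : ∃ ρ : ℝ, 0 < ρ ∧ ρ ≤ ρ0 ∧ ρ ≤ x0 ∧ ρ ≤ 1 - x0 ∧ ρ ≤ x1
      ∧ ρ ≤ 1 - x1 := by
    refine ⟨min ρ0 (min x0 (min (1-x0) (min x1 (1-x1)))), ?_, ?_, ?_, ?_, ?_, ?_⟩
    · simp only [lt_min_iff, sub_pos]; exact ⟨hρ0, hx0.1, hx0.2, hx1.1, hx1.2⟩
    all_goals simp
  set A := η / ρ^6 with hA
  have hA0 : 0 < A := by positivity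
  set κ := (x1 - x0) / (T - s) with hκ
  set α := (30 + 6 * |κ| * ρ)^2 / (96 * ρ^2) with hα
  have hTs : 0 < T - s := sub_pos.2 hsT
  have hκT : κ * (T - s) = x1 - x0 := by rw [hκ]; field_simp
  have hcen : ∀ t ∈ Icc s T, ρ ≤ x0 + κ * (t - s) ∧ x0 + κ * (t - s) ≤ 1 - ρ := by
    intro t ht
    have e : x0 + κ * (t - s) = x0 + ((t-s)/(T-s)) * (x1 - x0) := by rw [hκ]; field_simp
    have t1 : 0 ≤ (t-s)/(T-s) := div_nonneg (by linarith [ht.1]) hTs.le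
    have t2 : (t-s)/(T-s) ≤ 1 := (div_le_one hTs).2 (by linarith [ht.2])
    rw [e]; constructor <;> nlinarith
  have hz : ∀ t ∈ Icc s T, bF A ρ x0 κ α s t 0 = 0 ∧ bF A ρ x0 κ α s t 1 = 0 := by
    intro t ht
    obtain ⟨c1, c2⟩ := hcen t ht
    have q0 : bQ ρ x0 κ s t 0 ≤ 0 := by unfold bQ bX; nlinarith
    have q1 : bQ ρ x0 κ s t 1 ≤ 0 := by unfold bQ bX; nlinarith
    simp [bF, max_eq_right q0, max_eq_right q1]
  have hvc := bF_cont A ρ x0 κ α s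
  have hvtc := bFt_cont A ρ x0 κ α s
  have hvxc := bFxx_cont A ρ x0 κ α s
  have key := comparison (z := fun t => u t - toH _ (slice_cont hvc t))
    (z' := fun t => u' t - toH _ (slice_cont hvtc t))
    (zxx := fun t => uxx t - toH _ (slice_cont hvxc t)) (K := 0) hsT ?_ ?_ ?_ ?_ ?_
  · -- conclusion
    have hle : ∀ᵐ x ∂μ01, bF A ρ x0 κ α s T x ≤ UT x := by
      filter_upwards [key, Lp.coeFn_sub (u T) (toH _ (slice_cont hvc T)),
        toH_ae _ (slice_cont hvc T), hUTe] with x a b c d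
      rw [b, Pi.sub_apply, c] at a
      rw [d]; linarith
    have := le_of_ae_le_cont (slice_cont hvc T).continuousOn (hUT.mono Ioo_subset_Icc_self) hle
      x1 hx1
    refine lt_of_lt_of_le ?_ this
    have q : bQ ρ x0 κ s T x1 = ρ^2 := by unfold bQ bX; rw [hκT]; ring
    unfold bF
    rw [q, max_eq_left (by positivity)]
    positivity
  · exact (hu.cont.mono (fun t ht => hs.le.trans ht.1)).sub (toH_continuous hvc).continuousOn
  · intro T1 h1 h2
    obtain ⟨i, f⟩ := hu.fund T1 T (hs.trans h1) h2
    have ic : Continuous fun t => toH _ (slice_cont hvtc t) := toH_continuous hvtc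
    refine ⟨i.sub (ic.intervalIntegrable _ _), fun t ht => ?_⟩
    rw [intervalIntegral.integral_sub (i.mono_set ?_) (ic.intervalIntegrable _ _), f t ht,
      toH_fund hvc hvtc (bF_t A ρ x0 κ α s) T1 t]
    · abel
    · rw [uIcc_of_le ht.1, uIcc_of_le h2.le]; exact Icc_subset_Icc_right ht.2
  · filter_upwards [(ae_restrict_iff' measurableSet_Ioi).1 hu.dom] with t h ht
    obtain ⟨z0, z1⟩ := hz t (Ioo_subset_Icc_self ht)
    exact domA_sub (h (hs.trans ht.1)) (bF_dom A ρ x0 κ α s t z0 z1)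
  · filter_upwards [supersol hC hu hn hs hsT] with t h ht
    filter_upwards [h ht, toH_ae _ (slice_cont hvtc t), toH_ae _ (slice_cont hvxc t),
      Lp.coeFn_sub (u' t) (toH _ (slice_cont hvtc t)),
      Lp.coeFn_sub (uxx t) (toH _ (slice_cont hvxc t))] with x a1 a2 a3 a4 a5 _
    rw [a4, a5, Pi.sub_apply, Pi.sub_apply, a2, a3]
    have := bF_sub A ρ x0 κ α s hA0.le hρ le_rfl t x
    linarith
  · filter_upwards [hn s hs.le, Lp.coeFn_sub (u s) (toH _ (slice_cont hvc s)),
        toH_ae _ (slice_cont hvc s), hU0e] with x a b c d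
    rw [b, Pi.sub_apply, c]
    rcases le_or_gt (bQ ρ x0 κ s s x) 0 with q | q
    · simp only [bF, max_eq_right q]; simpa using a
    · have hd : |x - x0| < ρ := by
        apply abs_lt_of_sq_lt_sq _ hρ.le
        unfold bQ bX at q; simp at q; linarith
      have := hb0 x (by rw [Metric.mem_ball, Real.dist_eq]; linarith)
      rw [← d]
      have q2 : bQ ρ x0 κ s s x ≤ ρ^2 := by unfold bQ; nlinarith [sq_nonneg (bX x0 κ s s x)]
      have : bF A ρ x0 κ α s s x ≤ η := by
        unfold bF; rw [max_eq_left q.le]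
        have q3 : bQ ρ x0 κ s s x ^ 3 ≤ (ρ^2)^3 := by gcongr
        calc A * Real.exp (-α * (s - s)) * bQ ρ x0 κ s s x ^ 3 = A * bQ ρ x0 κ s s x ^ 3 := by simp
          _ ≤ A * (ρ^2)^3 := by gcongr
          _ = η := by rw [hA]; field_simp
      linarith

lemma sine_complete (v : Hsp)
    (h : ∀ k : ℕ, ∫ x, v x * Real.sin (k * Real.pi * x) ∂μ01 = 0) : ∀ᵐ x ∂μ01, v x = 0 := by
  have hint : ∀ n : ℤ, ∫ x, v x * Real.sin (n * Real.pi * x) ∂μ01 = 0 := by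
    intro n
    obtain ⟨m, rfl | rfl⟩ := n.eq_nat_or_neg
    · simpa using h m
    · have := h m
      have e2 : ∀ x : ℝ, v x * Real.sin (((-(m : ℤ) : ℤ) : ℝ) * Real.pi * x)
          = - (v x * Real.sin ((m : ℝ) * Real.pi * x)) := by
        intro x
        rw [← mul_neg, ← Real.sin_neg]; congr 2; push_cast; ring
      simp_rw [e2]
      rw [integral_neg, this, neg_zero]
  set v0 : ℝ → ℝ := indicator (Ioo (0:ℝ) 1) (v : ℝ → ℝ) with hv0
  have m0 : MemLp v0 2 volume := (memLp_indicator_iff_restrict measurableSet_Ioo).2 (Lp.memLp v)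
  have m1 : MemLp (fun x => v0 (-x)) 2 volume :=
    m0.comp_measurePreserving (Measure.measurePreserving_neg volume)
  set g : ℝ → ℂ := fun x => ((v0 x - v0 (-x) : ℝ) : ℂ) with hg
  have mg : MemLp g 2 (volume.restrict (Ioc (-1:ℝ) 1)) := ((m0.sub m1).restrict _).ofReal
  have hab : (-1:ℝ) < 1 := by norm_num
  have i0 : IntervalIntegrable v0 volume (-1) 1 := by
    rw [intervalIntegrable_iff_integrableOn_Ioc_of_le hab.le]
    exact (m0.restrict (Ioc (-1:ℝ) 1)).integrable (by norm_num)
  have i1 : IntervalIntegrable (fun x => v0 (-x)) volume (-1) 1 := by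
    rw [intervalIntegrable_iff_integrableOn_Ioc_of_le hab.le]
    exact (m1.restrict (Ioc (-1:ℝ) 1)).integrable (by norm_num)
  have j0 : IntervalIntegrable (fun x => (v0 x : ℂ)) volume (-1) 1 := ⟨i0.1.ofReal, i0.2.ofReal⟩
  have j1 : IntervalIntegrable (fun x => (v0 (-x) : ℂ)) volume (-1) 1 :=
    ⟨i1.1.ofReal, i1.2.ofReal⟩
  have coef : ∀ n : ℤ, fourierCoeffOn hab g n = 0 := by
    intro n
    rw [fourierCoeffOn_eq_integral]
    have e : ∀ x : ℝ, (fourier (-n) (x : AddCircle ((1:ℝ) - (-1)))) • g x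
        = Complex.exp (-(n * Real.pi * x) * Complex.I) * (v0 x : ℂ)
          - Complex.exp (-(n * Real.pi * x) * Complex.I) * (v0 (-x) : ℂ) := by
      intro x
      rw [fourier_coe_apply, smul_eq_mul, ← mul_sub, hg]
      congr 1
      · congr 1; push_cast; ring
      · push_cast; ring
    simp_rw [e]
    have c1 : Continuous fun x : ℝ => Complex.exp (-(n * Real.pi * x) * Complex.I) := by fun_prop
    have c2 : Continuous fun x : ℝ => Complex.exp ((n * Real.pi * x) * Complex.I) := by fun_prop
    rw [intervalIntegral.integral_sub (j0.continuousOn_mul c1.continuousOn)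
      (j1.continuousOn_mul c1.continuousOn)]
    have e3 : ∫ x in (-1:ℝ)..1, Complex.exp (-(n * Real.pi * x) * Complex.I) * (v0 (-x) : ℂ)
        = ∫ x in (-1:ℝ)..1, Complex.exp ((n * Real.pi * x) * Complex.I) * (v0 x : ℂ) := by
      have := intervalIntegral.integral_comp_neg (a := -1) (b := 1)
        (fun x : ℝ => Complex.exp ((n * Real.pi * x) * Complex.I) * (v0 x : ℂ))
      rw [neg_neg] at this
      rw [← this]
      congr 1; funext x; push_cast; congr 3; ring
    rw [e3, ← intervalIntegral.integral_sub (j0.continuousOn_mul c1.continuousOn)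
      (j0.continuousOn_mul c2.continuousOn)]
    have e4 : ∀ x : ℝ, Complex.exp (-(n * Real.pi * x) * Complex.I) * (v0 x : ℂ)
        - Complex.exp ((n * Real.pi * x) * Complex.I) * (v0 x : ℂ)
        = (-2 * Complex.I) * ((v0 x * Real.sin (n * Real.pi * x) : ℝ) : ℂ) := by
      intro x
      push_cast
      rw [Complex.sin]
      linear_combination (Complex.exp (-(n * Real.pi * x) * Complex.I) * v0 x - Complex.exp ((n * Real.pi * x) * Complex.I) * (v0 x : ℂ)) * Complex.I_sq
    simp_rw [e4]
    rw [intervalIntegral.integral_const_mul, intervalIntegral.integral_ofReal]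
    have e5 : ∫ x in (-1:ℝ)..1, v0 x * Real.sin (n * Real.pi * x) = 0 := by
      refine Eq.trans ?_ (hint n)
      rw [intervalIntegral.integral_of_le hab.le]
      change _ = ∫ x in Ioo (0:ℝ) 1, v x * Real.sin (n * Real.pi * x)
      have : (fun x => v0 x * Real.sin (n * Real.pi * x))
          = indicator (Ioo (0:ℝ) 1) (fun x => v x * Real.sin (n * Real.pi * x)) := by
        funext x; simp only [hv0, indicator]; split_ifs <;> simp
      rw [this, setIntegral_indicator measurableSet_Ioo]
      congr 2
      apply inter_eq_right.2
      intro x hx; exact ⟨by linarith [hx.1], hx.2.le⟩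
    rw [e5]; simp
  have hs := hasSum_sq_fourierCoeffOn hab mg
  simp only [coef, norm_zero, ne_eq, OfNat.ofNat_ne_zero, not_false_eq_true, zero_pow] at hs
  have h0 := hs.unique hasSum_zero
  have h1 : ∫ x in (-1:ℝ)..1, ‖g x‖^2 = 0 := by
    rw [smul_eq_mul] at h0
    rcases mul_eq_zero.1 h0 with h | h
    · norm_num at h
    · exact h
  rw [intervalIntegral.integral_of_le hab.le, integral_eq_zero_iff_of_nonneg
    (fun x => by positivity) mg.integrable_norm_pow'] at h1
  rw [Filter.EventuallyEq, ae_restrict_iff' measurableSet_Ioc] at h1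
  rw [ae_μ01_iff]
  filter_upwards [h1] with x hx hx'
  have := hx ⟨by linarith [hx'.1], hx'.2.le⟩
  simp only [Pi.zero_apply, ne_eq, OfNat.ofNat_ne_zero, not_false_eq_true, pow_eq_zero_iff,
    norm_eq_zero, hg, Complex.ofReal_eq_zero, hv0] at this
  rw [indicator_of_mem hx', indicator_of_notMem (fun h => by linarith [h.1, hx'.1])] at this
  simpa using this

lemma int_cos (m : ℤ) (hm : m ≠ 0) : ∫ x in (0:ℝ)..1, Real.cos (m * Real.pi * x) = 0 := by
  have hm' : (m * Real.pi : ℝ) ≠ 0 := mul_ne_zero (by exact_mod_cast hm) Real.pi_ne_zero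
  rw [intervalIntegral.integral_comp_mul_left (fun x => Real.cos x) hm']
  simp [Real.sin_int_mul_pi]

lemma sin_orth (k j : ℕ) (hj : j ≠ 0) :
    ∫ x, Real.sin (k * Real.pi * x) * Real.sin (j * Real.pi * x) ∂μ01
      = if k = j then 1/2 else 0 := by
  rw [integral_μ01]
  have e : ∀ x : ℝ, Real.sin (k * Real.pi * x) * Real.sin (j * Real.pi * x)
      = (1/2) * (Real.cos (((k - j : ℤ) : ℝ) * Real.pi * x) - Real.cos (((k + j : ℤ) : ℝ) * Real.pi * x)) := by
    intro x
    push_cast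
    rw [show ((k:ℝ) - j) * Real.pi * x = k * Real.pi * x - j * Real.pi * x by ring,
      show ((k:ℝ) + j) * Real.pi * x = k * Real.pi * x + j * Real.pi * x by ring,
      Real.cos_sub, Real.cos_add]; ring
  simp_rw [e]
  rw [intervalIntegral.integral_const_mul, intervalIntegral.integral_sub
    (Continuous.intervalIntegrable (by fun_prop) _ _)
    (Continuous.intervalIntegrable (by fun_prop) _ _), int_cos (k + j) (by omega)]
  split_ifs with h
  · subst h; simp
  · rw [int_cos (k - j) (by omega)]; simp

lemma sine_synth (v : Hsp) (D : ℝ)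
    (hD : ∀ k : ℕ, k ≠ 0 → |∫ x, v x * Real.sin (k * Real.pi * x) ∂μ01| ≤ D / (k * Real.pi)^2) :
    ∃ U : ℝ → ℝ, Continuous U ∧ ∀ᵐ x ∂μ01, U x = v x := by
  set y : ℕ → ℝ := fun k => ∫ x, v x * Real.sin (k * Real.pi * x) ∂μ01 with hy
  have hsum : Summable fun k : ℕ => 2 * D / Real.pi^2 * (1 / (k:ℝ)^2) :=
    (Real.summable_one_div_nat_pow.2 one_lt_two).mul_left _
  have hb : ∀ (k : ℕ) (x : ℝ), ‖2 * y k * Real.sin (k * Real.pi * x)‖ ≤ 2 * D / Real.pi^2 * (1 / (k:ℝ)^2) := by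
    intro k x
    rcases eq_or_ne k 0 with rfl | hk
    · simp
    · rw [norm_mul, norm_mul, Real.norm_eq_abs, Real.norm_eq_abs, Real.norm_eq_abs, abs_two]
      have h1 := hD k hk
      have h2 := Real.abs_sin_le_one (k * Real.pi * x)
      have hk' : (0:ℝ) < k := by positivity
      calc 2 * |y k| * |Real.sin (k * Real.pi * x)| ≤ 2 * |y k| * 1 := by gcongr
        _ ≤ 2 * (D / (k * Real.pi)^2) := by rw [mul_one]; gcongr
        _ = _ := by have := Real.pi_pos; field_simp
  have hUc : Continuous fun x : ℝ => ∑' k : ℕ, 2 * y k * Real.sin (k * Real.pi * x) :=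
    continuous_tsum (fun k => by fun_prop) hsum hb
  refine ⟨_, hUc, ?_⟩
  have key : ∀ j : ℕ, ∫ x, (v - toH _ hUc : Hsp) x * Real.sin (j * Real.pi * x) ∂μ01 = 0 := by
    intro j
    rcases eq_or_ne j 0 with rfl | hj
    · simp
    have cs : Continuous fun x : ℝ => Real.sin (j * Real.pi * x) := by fun_prop
    have e1 : ∫ x, (v - toH _ hUc : Hsp) x * Real.sin (j * Real.pi * x) ∂μ01
        = ∫ x, (v x * Real.sin (j * Real.pi * x) - ∑' k : ℕ, 2 * y k * Real.sin (k * Real.pi * x) * Real.sin (j * Real.pi * x)) ∂μ01 := by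
      apply integral_congr_ae
      filter_upwards [Lp.coeFn_sub v (toH _ hUc), toH_ae _ hUc] with x a b
      rw [a, Pi.sub_apply, b, sub_mul, tsum_mul_right]
    have i1 : Integrable (fun x => v x * Real.sin (j * Real.pi * x)) μ01 := by
      have := (Lp.memLp v).integrable_mul (memLp_cont cs)
      exact this
    have ik : ∀ k : ℕ, Integrable (fun x : ℝ => 2 * y k * Real.sin (k * Real.pi * x) * Real.sin (j * Real.pi * x)) μ01 :=
      fun k => (memLp_cont (by fun_prop)).integrable (by norm_num)
    have bk : ∀ k : ℕ, ∀ x : ℝ, ‖2 * y k * Real.sin (k * Real.pi * x) * Real.sin (j * Real.pi * x)‖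
        ≤ 2 * D / Real.pi^2 * (1 / (k:ℝ)^2) := by
      intro k x
      rw [norm_mul]
      exact (mul_le_of_le_one_right (norm_nonneg _) (Real.abs_sin_le_one _)).trans (hb k x)
    have hs := hasSum_integral_of_summable_integral_norm ik (by
      refine Summable.of_nonneg_of_le (fun k => integral_nonneg fun x => norm_nonneg _) (fun k => ?_) hsum
      calc _ ≤ ∫ x, (2 * D / Real.pi^2 * (1 / (k:ℝ)^2)) ∂μ01 :=
            integral_mono (ik k).norm (integrable_const _) (bk k)
        _ = _ := by simp)
    have hs2 : HasSum (fun k : ℕ => ∫ x, 2 * y k * Real.sin (k * Real.pi * x) * Real.sin (j * Real.pi * x) ∂μ01) (y j) := by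
      have : ∀ k : ℕ, ∫ x, 2 * y k * Real.sin (k * Real.pi * x) * Real.sin (j * Real.pi * x) ∂μ01
          = if k = j then y j else 0 := by
        intro k
        simp_rw [mul_assoc (2 * y k)]
        rw [integral_const_mul]
        rw [sin_orth k j hj]
        split_ifs with h
        · subst h; ring
        · ring
      simp_rw [this]
      exact hasSum_ite_eq j (y j)
    have iU : Integrable (fun x : ℝ => ∑' k : ℕ, 2 * y k * Real.sin (k * Real.pi * x) * Real.sin (j * Real.pi * x)) μ01 := by
      simp_rw [tsum_mul_right]
      exact (memLp_cont (hUc.mul cs)).integrable (by norm_num)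
    rw [e1, integral_sub i1 iU, hs.unique hs2]
    simp [hy]
  filter_upwards [sine_complete _ key, Lp.coeFn_sub v (toH _ hUc), toH_ae _ hUc] with x a b c
  rw [b, Pi.sub_apply, c] at a
  linarith

lemma ode_bound {y f : ℝ → ℝ} {a t l M C : ℝ} (hat : a < t) (hl : 0 < l) (hM : 0 ≤ M) (hC : 0 ≤ C)
    (hc : ContinuousOn y (Icc a t)) (hd : ∀ s ∈ Ioo a t, HasDerivAt y (-l * y s + f s) s)
    (hf : ∀ s ∈ Ioo a t, f s ≤ M) (ha : y a ≤ C) : y t ≤ (M + C / (t - a)) / l := by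
  have hE : ∀ s : ℝ, HasDerivAt (fun s => Real.exp (l * (s - a))) (Real.exp (l * (s - a)) * l) s := by
    intro s
    have := (((hasDerivAt_id s).sub_const a).const_mul l).exp
    simpa using this
  have hD : ∀ s ∈ Ioo a t, HasDerivAt (fun s => Real.exp (l * (s - a)) * (y s - M / l))
      (Real.exp (l * (s - a)) * (f s - M)) s := by
    intro s hs
    refine ((hE s).mul ((hd s hs).sub_const (M / l))).congr_deriv ?_
    field_simp; ring
  have anti : AntitoneOn (fun s => Real.exp (l * (s - a)) * (y s - M / l)) (Icc a t) := by
    apply antitoneOn_of_deriv_nonpos (convex_Icc _ _)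
    · exact (Continuous.continuousOn (by fun_prop)).mul (hc.sub continuousOn_const)
    · rw [interior_Icc]; exact fun s hs => (hD s hs).differentiableAt.differentiableWithinAt
    · rw [interior_Icc]; intro s hs
      rw [(hD s hs).deriv]
      exact mul_nonpos_of_nonneg_of_nonpos (Real.exp_pos _).le (by linarith [hf s hs])
  have h := anti (left_mem_Icc.2 hat.le) (right_mem_Icc.2 hat.le) hat.le
  simp only [sub_self, mul_zero, Real.exp_zero, one_mul] at h
  have hta : 0 < t - a := sub_pos.2 hat
  have hx : l * (t - a) ≤ Real.exp (l * (t - a)) := by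
    linarith [Real.add_one_le_exp (l * (t - a))]
  have hMl : 0 ≤ M / l := by positivity
  have hp := Real.exp_pos (l * (t - a))
  by_contra hneg
  push Not at hneg
  have h2 : C / (l * (t - a)) < y t - M / l := by
    have : (M + C / (t - a)) / l = M / l + C / (l * (t - a)) := by field_simp
    linarith
  have h3 : C ≤ Real.exp (l * (t - a)) * (C / (l * (t - a))) := by
    rw [mul_div_assoc', le_div_iff₀ (by positivity), mul_comm]
    exact mul_le_mul_of_nonneg_right hx hC
  have h4 := mul_lt_mul_of_pos_left h2 hp
  linarith

/-- the sine modes -/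
def sk (k : ℕ) : Hsp := toH (fun x => Real.sin (k * Real.pi * x)) (by fun_prop)

lemma inner_sk (k : ℕ) (v : Hsp) : inner ℝ (sk k) v = ∫ x, v x * Real.sin (k * Real.pi * x) ∂μ01 := by
  rw [inner_Hsp]
  apply integral_congr_ae
  filter_upwards [toH_ae (fun x => Real.sin (k * Real.pi * x)) (by fun_prop)] with x hx
  rw [sk, hx]

lemma norm_sk (k : ℕ) : ‖sk k‖ ≤ 1 := by
  apply norm_le_of_bound zero_le_one
  filter_upwards [toH_ae (fun x => Real.sin (k * Real.pi * x)) (by fun_prop)] with x hx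
  rw [sk, hx]; exact Real.abs_sin_le_one _

/-- the constant function one -/
def oneH : Hsp := toH (fun _ => 1) continuous_const

lemma norm_oneH : ‖oneH‖ ≤ 1 := by
  apply norm_le_of_bound zero_le_one
  filter_upwards [toH_ae (fun _ => 1) continuous_const] with x hx
  rw [oneH, hx]; simp

lemma linear_rep {b ω : ℝ → ℝ} {b0 b1 ω0 ω1 τ : ℝ} (hC : Cond1 b ω b0 b1 ω0 ω1)
    {u u' uxx : ℝ → Hsp} (hu : IsLinearSolutionWith b ω τ u u' uxx) {t : ℝ} (ht : τ < t) :
    ∃ U : ℝ → ℝ, Continuous U ∧ ∀ᵐ x ∂μ01, U x = u t x := by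
  obtain ⟨a, ha1, ha2⟩ := exists_between ht
  have hcu : ContinuousOn u (Icc a t) := hu.cont.mono fun s hs => ha1.le.trans hs.1
  obtain ⟨Cu, hCu⟩ := isCompact_Icc.exists_bound_of_continuousOn hcu
  have hCu0 : 0 ≤ Cu := (norm_nonneg _).trans (hCu a (left_mem_Icc.2 ha2.le))
  have hω1 : 0 ≤ ω1 := hC.ω0nonneg.trans ((hC.ωlb t).trans (hC.ωub t))
  have hb1 : 0 ≤ b1 := hC.b0pos.le.trans ((hC.blb t).trans (hC.bub t))
  set M := b1 + ω1 * Cu with hM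
  have hM0 : 0 ≤ M := by positivity
  apply sine_synth (u t) (M + Cu / (t - a))
  intro k hk
  rw [← inner_sk]
  set l := (k * Real.pi)^2 with hl
  have hl0 : 0 < l := by have := Real.pi_pos; positivity
  set y : ℝ → ℝ := fun s => inner ℝ (sk k) (u s) with hy
  set f : ℝ → ℝ := fun s => b s * inner ℝ (sk k) oneH + ω s * y s with hf
  have hyc : ContinuousOn y (Icc a t) := continuousOn_const.inner hcu
  have hFc : ContinuousOn (fun s => -l * y s + f s) (Icc a t) :=
    (continuousOn_const.mul hyc).add ((hC.contb.continuousOn.mul continuousOn_const).add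
      (hC.contω.continuousOn.mul hyc))
  have hyb : ∀ s ∈ Icc a t, |y s| ≤ Cu := fun s hs => by
    refine (abs_real_inner_le_norm _ _).trans ?_
    calc ‖sk k‖ * ‖u s‖ ≤ 1 * Cu := mul_le_mul (norm_sk k) (hCu s hs) (norm_nonneg _) zero_le_one
      _ = Cu := one_mul _
  have h1b : |inner ℝ (sk k) oneH| ≤ 1 := by
    refine (abs_real_inner_le_norm _ _).trans ?_
    exact mul_le_one₀ (norm_sk k) (norm_nonneg _) norm_oneH
  have hfb : ∀ s ∈ Icc a t, |f s| ≤ M := fun s hs => by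
    refine (abs_add_le _ _).trans ?_
    have hbs : 0 ≤ b s := hC.b0pos.le.trans (hC.blb s)
    have hωs : 0 ≤ ω s := hC.ω0nonneg.trans (hC.ωlb s)
    rw [abs_mul, abs_mul, abs_of_nonneg hbs, abs_of_nonneg hωs]
    apply add_le_add
    · calc b s * _ ≤ b1 * 1 := mul_le_mul (hC.bub s) h1b (abs_nonneg _) hb1
        _ = b1 := mul_one _
    · exact mul_le_mul (hC.ωub s) (hyb s hs) (abs_nonneg _) hω1
  have hode : ∀ᵐ s, s ∈ Ioi τ → inner ℝ (sk k) (u' s) = -l * y s + f s := by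
    filter_upwards [(ae_restrict_iff' measurableSet_Ioi).1 hu.dom,
      (ae_restrict_iff' measurableSet_Ioi).1 hu.eq] with s h1 h2 hs
    have e : u' s = b s • oneH + ω s • u s + uxx s := by
      apply Lp.ext
      filter_upwards [h2 hs, Lp.coeFn_add (b s • oneH + ω s • u s) (uxx s),
        Lp.coeFn_add (b s • oneH) (ω s • u s), Lp.coeFn_smul (b s) oneH,
        Lp.coeFn_smul (ω s) (u s), toH_ae (fun _ => 1) continuous_const] with x a1 a2 a3 a4 a5 a6
      rw [a1, a2, Pi.add_apply, a3, Pi.add_apply, a4, a5, Pi.smul_apply, Pi.smul_apply, oneH, a6]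
      simp
    have e2 := domA_sin (h1 hs) k (Real.sin_nat_mul_pi k)
    rw [← inner_sk, ← inner_sk] at e2
    rw [e, inner_add_right, inner_add_right, inner_smul_right, inner_smul_right, e2]
    simp only [hf, hy, hl]; ring
  have hyfund : ∀ s ∈ Icc a t, y s = y a + ∫ σ in a..s, (-l * y σ + f σ) := by
    intro s hs
    obtain ⟨i, g⟩ := hu.fund a t ha1 ha2
    have i' : IntervalIntegrable u' volume a s := i.mono_set (by
      rw [uIcc_of_le hs.1, uIcc_of_le ha2.le]; exact Icc_subset_Icc_right hs.2)
    have := (innerSL ℝ (sk k)).intervalIntegral_comp_comm i'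
    simp only [innerSL_apply_apply] at this
    simp only [hy]
    rw [g s hs, inner_add_right, ← this]
    congr 1
    apply intervalIntegral.integral_congr_ae
    filter_upwards [hode] with σ h1 h2
    rw [uIoc_of_le hs.1] at h2
    exact h1 (ha1.trans h2.1)
  have hyd : ∀ s ∈ Ioo a t, HasDerivAt y (-l * y s + f s) s := by
    intro s hs
    have hnhds : Icc a t ∈ nhds s := Icc_mem_nhds hs.1 hs.2
    have hii : IntervalIntegrable (fun s => -l * y s + f s) volume a s :=
      (hFc.mono (Icc_subset_Icc_right hs.2.le)).intervalIntegrable_of_Icc hs.1.le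
    have := intervalIntegral.integral_hasDerivAt_right hii
      (hFc.stronglyMeasurableAtFilter_nhdsWithin measurableSet_Icc s |>.filter_mono (by
        rw [nhdsWithin_eq_nhds.2 hnhds])) (hFc.continuousAt hnhds)
    refine (this.const_add (y a)).congr_of_eventuallyEq ?_
    filter_upwards [hnhds] with σ hσ using hyfund σ hσ
  have hya := hyb a (left_mem_Icc.2 ha2.le)
  rw [abs_le]
  constructor
  · have := ode_bound (y := fun s => - y s) (f := fun s => - f s) ha2 hl0 hM0 hCu0 hyc.neg
      (fun s hs => ((hyd s hs).neg).congr_deriv (by ring))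
      (fun s hs => (neg_le_abs _).trans (hfb s (Ioo_subset_Icc_self hs)))
      ((neg_le_abs _).trans hya)
    change - y t ≤ _ at this
    change _ ≤ y t
    linarith
  · exact ode_bound ha2 hl0 hM0 hCu0 hyc hyd
      (fun s hs => (le_abs_self _).trans (hfb s (Ioo_subset_Icc_self hs)))
      ((le_abs_self _).trans hya)

lemma lin_le {b ω : ℝ → ℝ} {b0 b1 ω0 ω1 τ : ℝ} (hC : Cond1 b ω b0 b1 ω0 ω1)
    {u w : ℝ → Hsp} (hu : IsLinearSolution b ω τ u) (hw : IsLinearSolution b ω τ w)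
    (h0 : w τ = u τ) {T : ℝ} (hT : τ < T) : ∀ᵐ x ∂μ01, u T x ≤ w T x := by
  obtain ⟨u', uxx, hu⟩ := hu
  obtain ⟨w', wxx, hw⟩ := hw
  have key := comparison (z := fun t => w t - u t) (z' := fun t => w' t - u' t)
    (zxx := fun t => wxx t - uxx t) (K := ω1) hT ?_ ?_ ?_ ?_ ?_
  · filter_upwards [key, Lp.coeFn_sub (w T) (u T)] with x a b
    rw [b, Pi.sub_apply] at a; linarith
  · exact (hw.cont.sub hu.cont).mono fun t ht => ht.1
  · intro T1 h1 h2
    obtain ⟨i, f⟩ := hu.fund T1 T h1 h2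
    obtain ⟨i', f'⟩ := hw.fund T1 T h1 h2
    refine ⟨i'.sub i, fun t ht => ?_⟩
    have hsub : uIcc T1 t ⊆ uIcc T1 T := by
      rw [uIcc_of_le ht.1, uIcc_of_le h2.le]; exact Icc_subset_Icc_right ht.2
    rw [intervalIntegral.integral_sub (i'.mono_set hsub) (i.mono_set hsub), f t ht, f' t ht]
    abel
  · filter_upwards [(ae_restrict_iff' measurableSet_Ioi).1 hu.dom,
      (ae_restrict_iff' measurableSet_Ioi).1 hw.dom] with t h h' ht
    exact domA_sub (h' ht.1) (h ht.1)
  · filter_upwards [(ae_restrict_iff' measurableSet_Ioi).1 hu.eq,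
      (ae_restrict_iff' measurableSet_Ioi).1 hw.eq] with t h h' ht
    filter_upwards [h ht.1, h' ht.1, Lp.coeFn_sub (w t) (u t), Lp.coeFn_sub (w' t) (u' t),
      Lp.coeFn_sub (wxx t) (uxx t)] with x a1 a2 a3 a4 a5 hx
    rw [a3, Pi.sub_apply] at hx
    rw [a3, a4, a5, Pi.sub_apply, Pi.sub_apply, Pi.sub_apply, a1, a2]
    nlinarith [hC.ωub t]
  · filter_upwards [Lp.coeFn_sub (w τ) (u τ)] with x a
    rw [a, h0]; simp

/-- if `u_τ ≡ 0`, then apart from the zero solution, every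
non-negative strong solution of the inclusion is zero up to some time `t₀ ≥ τ` and,
from `t₀` onwards, coincides with the unique solution of the linear problem
`∂u/∂t − ∂²u/∂x² = b(t) + ω(t)u` with datum `0` at `t₀`; moreover it is positive
for every `t > t₀`. -/
theorem statement2
    (b ω : ℝ → ℝ) (b0 b1 ω0 ω1 τ : ℝ) (hC : Cond1 b ω b0 b1 ω0 ω1)
    (u : ℝ → Hsp)
    (hsol : IsStrongSolution b ω τ u) (hinit : u τ = 0) (hnneg : NonnegOn u τ) :
    (∀ t, τ ≤ t → u t = 0) ∨
    ∃ t₀, τ ≤ t₀ ∧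
      (∀ t ∈ Icc τ t₀, u t = 0) ∧
      IsLinearSolution b ω t₀ u ∧
      (∀ w : ℝ → Hsp, IsLinearSolution b ω t₀ w → w t₀ = 0 →
        ∀ t, t₀ ≤ t → w t = u t) ∧
      ∀ t, t₀ < t → IsPositive (u t) := by
  by_cases hall : ∀ t, τ ≤ t → u t = 0
  · exact Or.inl hall
  right
  push Not at hall
  obtain ⟨r, u', uxx, hu⟩ := hsol
  set E : Set ℝ := {t | τ ≤ t ∧ u t ≠ 0} with hE
  have hne : E.Nonempty := hall
  have hbd : BddBelow E := ⟨τ, fun t ht => ht.1⟩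
  set t₀ := sInf E with ht₀
  have hτ : τ ≤ t₀ := le_csInf hne fun t ht => ht.1
  have hlt : ∀ t, τ ≤ t → t < t₀ → u t = 0 := by
    intro t h1 h2
    by_contra h
    exact absurd (csInf_le hbd (show t ∈ E from ⟨h1, h⟩)) (not_le.2 h2)
  have hut0 : u t₀ = 0 := by
    rcases hτ.eq_or_lt with h | h
    · rw [← h]; exact hinit
    · have c : ContinuousWithinAt u (Ioo τ t₀) t₀ :=
        (hu.cont t₀ hτ).mono fun s hs => hs.1.le
      have hnb : (nhdsWithin t₀ (Ioo τ t₀)).NeBot := by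
        rw [nhdsWithin_Ioo_eq_nhdsLT h]; infer_instance
      refine tendsto_nhds_unique c.tendsto (tendsto_const_nhds.congr' ?_)
      filter_upwards [self_mem_nhdsWithin] with s hs
      exact (hlt s hs.1.le hs.2).symm
  have hzero : ∀ t ∈ Icc τ t₀, u t = 0 := by
    intro t ht
    rcases ht.2.eq_or_lt with h | h
    · rw [h]; exact hut0
    · exact hlt t ht.1 h
  have hgood : ∀ t, t₀ < t → ∃ s, τ < s ∧ s < t ∧ ∃ U0 : ℝ → ℝ, ContinuousOn U0 (Icc 0 1) ∧
      (∀ᵐ x ∂μ01, U0 x = u s x) ∧ ∃ x0 ∈ Ioo (0:ℝ) 1, 0 < U0 x0 := by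
    intro t ht
    obtain ⟨e, he, het⟩ := exists_lt_of_csInf_lt hne ht
    have he0 : t₀ < e := lt_of_le_of_ne (csInf_le hbd he) (fun h => he.2 (h ▸ hut0))
    have hτe : τ < e := hτ.trans_lt he0
    have hce : ContinuousAt u e := hu.cont.continuousAt (Ici_mem_nhds hτe)
    have ev : ∀ᶠ s in nhds e, u s ≠ 0 ∧ s ∈ Ioo t₀ t :=
      (hce.eventually_ne he.2).and (Ioo_mem_nhds he0 het)
    have hd : Dense {s | s ∈ Ioi τ → InDomainA (u s) (uxx s)} :=
      Measure.dense_of_ae ((ae_restrict_iff' measurableSet_Ioi).1 hu.dom)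
    obtain ⟨s, hs1, hs2, hs3⟩ := ((mem_closure_iff_frequently.1 (hd e)).and_eventually ev).exists
    have hτs : τ < s := hτ.trans_lt hs3.1
    obtain ⟨vt, c1, -, -, c2, -⟩ := hs1 hτs
    refine ⟨s, hτs, hs3.2, vt, c1, c2, ?_⟩
    by_contra hcon
    push Not at hcon
    apply hs2
    apply Lp.ext
    filter_upwards [c2, hnneg s hτs.le, Lp.coeFn_zero ℝ 2 μ01,
      ae_μ01_iff.2 (Filter.Eventually.of_forall fun x hx => hx)] with x a1 a2 a3 a4
    rw [a3, Pi.zero_apply]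
    exact le_antisymm (a1 ▸ hcon x a4) a2
  have hpos : ∀ t, t₀ < t → ∀ UT : ℝ → ℝ, ContinuousOn UT (Icc 0 1) →
      (∀ᵐ x ∂μ01, UT x = u t x) → ∀ x ∈ Ioo (0:ℝ) 1, 0 < UT x := by
    intro t ht UT h1 h2
    obtain ⟨s, hs1, hs2, U0, c1, c2, x0, hx0, hp⟩ := hgood t ht
    exact positivity_lemma hC hu hnneg hs1 hs2 c1 c2 h1 h2 hx0 hp
  have hlin : IsLinearSolutionWith b ω t₀ u u' uxx := by
    have hsub : Ioi t₀ ⊆ Ioi τ := Ioi_subset_Ioi hτ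
    refine ⟨hu.cont.mono (Ici_subset_Ici.2 hτ), ae_restrict_of_ae_restrict_of_subset hsub hu.dom,
      ?_, fun T1 T2 h1 h2 => hu.fund T1 T2 (hτ.trans_lt h1) h2⟩
    rw [ae_restrict_iff' measurableSet_Ioi]
    filter_upwards [(ae_restrict_iff' measurableSet_Ioi).1 hu.dom,
      (ae_restrict_iff' measurableSet_Ioi).1 hu.eq,
      (ae_restrict_iff' measurableSet_Ioi).1 hu.sel] with t h1 h2 h3 ht
    obtain ⟨vt, c1, -, -, c2, -⟩ := h1 (hsub ht)
    have hp := hpos t ht vt c1 c2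
    have c := Lp.coeFn_add (r t) (uxx t)
    rw [← h2 (hsub ht)] at c
    filter_upwards [c, h3 (hsub ht), c2,
      ae_μ01_iff.2 (Filter.Eventually.of_forall fun x hx => hx)] with x a1 a2 a3 a4
    have hx : 0 < u t x := a3 ▸ hp x a4
    obtain ⟨y, hy, e⟩ := a2
    have : y = 1 := by
      simpa [heaviside, not_lt.2 hx.le, hx.ne'] using hy
    subst this
    rw [a1, Pi.add_apply, e, mul_one]
  refine ⟨t₀, hτ, hzero, ⟨u', uxx, hlin⟩, ?_, ?_⟩
  · intro w hw hw0 t ht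
    rcases ht.eq_or_lt with h | h
    · rw [← h, hw0, hut0]
    · apply Lp.ext
      filter_upwards [lin_le hC ⟨u', uxx, hlin⟩ hw (hw0.trans hut0.symm) h,
        lin_le hC hw ⟨u', uxx, hlin⟩ (hut0.trans hw0.symm) h] with x a b
      exact le_antisymm b a
  · intro t ht
    obtain ⟨U, hU, hUe⟩ := linear_rep hC hlin ht
    exact ⟨U, hU.continuousOn, hUe, hpos t ht U hU.continuousOn hUe⟩

end
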